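/- arXiv:2312.03657 — 11 statements merged into one kernel-verified Lean document; each statement's English description precedes it below -/
import Mathlib

section
/- Average–jump decomposition of boundary inner products (Proposition on average/jump operators): let H be a real inner product space, ι a finite type, and σ : ι → ι an involution (σ ∘ σ = id). For x : ι → H define the normal jump and normal average by jumpₙ x i := 0 if σ i = i and (x i + x (σ i))/2 otherwise; avₙ x i := x i if σ i = i and (x i − x (σ i))/2 otherwise. For y : ι → H define the tangential jump and tangential average by jumpₜ y i := y i if σ i = i and (y i − y (σ i))/2 otherwise; avₜ y i := 0 if σ i = i and (y i + y (σ i))/2 otherwise. Then for all x₁, x₂, y₁, y₂ : ι → H: (1) ∑ i, ⟪x₁ i, y₂ i⟫ = ∑ i, ⟪avₙ x₁ i, jumpₜ y₂ i⟫ + ∑ i, ⟪jumpₙ x₁ i, avₜ y₂ i⟫; (2) ∑ i, ⟪x₁ i, x₂ i⟫ = ∑ i, ⟪avₙ x₁ i, avₙ x₂ i⟫ + ∑ i, ⟪jumpₙ x₁ i, jumpₙ x₂ i⟫; (3) ∑ i, ⟪y₁ i, y₂ i⟫ = ∑ i, ⟪avₜ y₁ i, avₜ y₂ i⟫ + ∑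 i, ⟪jumpₜ y₁ i, jumpₜ y₂ i⟫. -/
open scoped RealInnerProductSpace

/-- The normal jump: zero at a boundary side (fixed point of `σ`), and half the sum of the
two side values at an interior facet. -/
noncomputable def jumpNor {H ι : Type*} [NormedAddCommGroup H] [InnerProductSpace ℝ H]
    [DecidableEq ι] (σ : ι → ι) (x : ι → H) (i : ι) : H :=
  if σ i = i then 0 else (2 : ℝ)⁻¹ • (x i + x (σ i))

/-- The normal average: the value itself at a boundary side, and half the difference of the
two side values at an interior facet. -/
noncomputable def avNor {H ι : Type*} [NormedAddCommGroup H] [InnerProductSpace ℝ H]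
    [DecidableEq ι] (σ : ι → ι) (x : ι → H) (i : ι) : H :=
  if σ i = i then x i else (2 : ℝ)⁻¹ • (x i - x (σ i))

/-- The tangential jump: the value itself at a boundary side, and half the difference of the
two side values at an interior facet. -/
noncomputable def jumpTan {H ι : Type*} [NormedAddCommGroup H] [InnerProductSpace ℝ H]
    [DecidableEq ι] (σ : ι → ι) (y : ι → H) (i : ι) : H :=
  if σ i = i then y i else (2 : ℝ)⁻¹ • (y i - y (σ i))

/-- The tangential average: zero at a boundary side, and half the sum of the two side values
at an interior facet. -/
noncomputable def avTan {H ι : Type*} [NormedAddCommGroup H] [InnerProductSpace ℝ H]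
    [DecidableEq ι] (σ : ι → ι) (y : ι → H) (i : ι) : H :=
  if σ i = i then 0 else (2 : ℝ)⁻¹ • (y i + y (σ i))

theorem sum_eq_sum_add_comp_div_two {K ι : Type*} [DivisionRing K] [NeZero (2 : K)] [Fintype ι]
    {σ : ι → ι} (hσ : σ.Bijective) (f : ι → K) :
    ∑ i, f i = ∑ i, (f i + f (σ i)) / 2 := by
  rw [← Finset.sum_div, Finset.sum_add_distrib, hσ.sum_comp f, add_self_div_two]

theorem inner_sub_sub_add_inner_add_add {𝕜 E : Type*} [RCLike 𝕜] [SeminormedAddCommGroup E]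
    [InnerProductSpace 𝕜 E] (a₁ a₂ b₁ b₂ : E) :
    inner 𝕜 (a₁ - a₂) (b₁ - b₂) + inner 𝕜 (a₁ + a₂) (b₁ + b₂) =
      2 * (inner 𝕜 a₁ b₁ + inner 𝕜 a₂ b₂) := by
  simp only [inner_add_left, inner_add_right, inner_sub_left, inner_sub_right]
  ring

section AverageJump

variable {H ι : Type*} [NormedAddCommGroup H] [InnerProductSpace ℝ H] [DecidableEq ι]

theorem jumpTan_eq_avNor (σ : ι → ι) (y : ι → H) : jumpTan σ y = avNor σ y := rfl

theorem avTan_eq_jumpNor (σ : ι → ι) (y : ι → H) : avTan σ y = jumpNor σ y := rfl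

/-- On a boundary side the two terms on the right coincide, which is why the convention
`avNor = id`, `jumpNor = 0` there obeys the interior formula. -/
theorem inner_avNor_add_inner_jumpNor (σ : ι → ι) (x y : ι → H) (i : ι) :
    ⟪avNor σ x i, avNor σ y i⟫ + ⟪jumpNor σ x i, jumpNor σ y i⟫ =
      (⟪x i, y i⟫ + ⟪x (σ i), y (σ i)⟫) / 2 := by
  by_cases boundary : σ i = i
  · simp only [avNor, jumpNor, boundary, if_true, inner_zero_left, add_zero, add_self_div_two]
  · simp only [avNor, jumpNor, boundary, if_false, real_inner_smul_left, real_inner_smul_right]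
    linear_combination
      (1 / 4 : ℝ) * inner_sub_sub_add_inner_add_add (𝕜 := ℝ) (x i) (x (σ i)) (y i) (y (σ i))

theorem sum_inner_eq_sum_inner_avNor_add_sum_inner_jumpNor [Fintype ι] {σ : ι → ι}
    (hσ : σ.Bijective) (x y : ι → H) :
    ∑ i, ⟪x i, y i⟫ =
      ∑ i, ⟪avNor σ x i, avNor σ y i⟫ + ∑ i, ⟪jumpNor σ x i, jumpNor σ y i⟫ :=
  calc ∑ i, ⟪x i, y i⟫
    _ = ∑ i, (⟪x i, y i⟫ + ⟪x (σ i), y (σ i)⟫) / 2 :=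
      sum_eq_sum_add_comp_div_two hσ fun i ↦ ⟪x i, y i⟫
    _ = ∑ i, (⟪avNor σ x i, avNor σ y i⟫ + ⟪jumpNor σ x i, jumpNor σ y i⟫) := by
      simp only [inner_avNor_add_inner_jumpNor]
    _ = ∑ i, ⟪avNor σ x i, avNor σ y i⟫ + ∑ i, ⟪jumpNor σ x i, jumpNor σ y i⟫ :=
      Finset.sum_add_distrib

theorem average_jump_decomposition_general [Fintype ι] (σ : ι → ι) (hσ : σ.Bijective)
    (x₁ x₂ y₁ y₂ : ι → H) :
    (∑ i, ⟪x₁ i, y₂ i⟫ =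
        ∑ i, ⟪avNor σ x₁ i, jumpTan σ y₂ i⟫ + ∑ i, ⟪jumpNor σ x₁ i, avTan σ y₂ i⟫)
    ∧ (∑ i, ⟪x₁ i, x₂ i⟫ =
        ∑ i, ⟪avNor σ x₁ i, avNor σ x₂ i⟫ + ∑ i, ⟪jumpNor σ x₁ i, jumpNor σ x₂ i⟫)
    ∧ (∑ i, ⟪y₁ i, y₂ i⟫ =
        ∑ i, ⟪avTan σ y₁ i, avTan σ y₂ i⟫ + ∑ i, ⟪jumpTan σ y₁ i, jumpTan σ y₂ i⟫) := by
  have split := sum_inner_eq_sum_inner_avNor_add_sum_inner_jumpNor (H := H) hσ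
  simp only [jumpTan_eq_avNor, avTan_eq_jumpNor]
  exact ⟨split x₁ y₂, split x₁ x₂, (split y₁ y₂).trans (add_comm _ _)⟩

end AverageJump

/-- Average–jump decomposition of boundary inner products: for an involution `σ` pairing the
facet-sides of a mesh, the `L²` pairing of a normal trace against a tangential trace splits
into average–jump cross terms, while the pairings of like traces split into
average–average plus jump–jump terms. -/
theorem average_jump_decomposition {H ι : Type*}
    [NormedAddCommGroup H] [InnerProductSpace ℝ H]
    [Fintype ι] [DecidableEq ι]
    (σ : ι → ι) (hσ : σ ∘ σ = id)
    (x₁ x₂ y₁ y₂ : ι → H) :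
    (∑ i, ⟪x₁ i, y₂ i⟫ =
        ∑ i, ⟪avNor σ x₁ i, jumpTan σ y₂ i⟫ + ∑ i, ⟪jumpNor σ x₁ i, avTan σ y₂ i⟫)
    ∧ (∑ i, ⟪x₁ i, x₂ i⟫ =
        ∑ i, ⟪avNor σ x₁ i, avNor σ x₂ i⟫ + ∑ i, ⟪jumpNor σ x₁ i, jumpNor σ x₂ i⟫)
    ∧ (∑ i, ⟪y₁ i, y₂ i⟫ =
        ∑ i, ⟪avTan σ y₁ i, avTan σ y₂ i⟫ + ∑ i, ⟪jumpTan σ y₁ i, jumpTan σ y₂ i⟫) :=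
  average_jump_decomposition_general σ (Function.Involutive.bijective (congrFun hσ)) x₁ x₂ y₁ y₂
end

section
/- Jump lemma for multisymplectic hybrid methods: let H and T be real inner product spaces, W_h a subspace (submodule) of H, and let tan, nor : H →ₗ[ℝ] T, D : H →ₗ[ℝ] H, A : H →ₗ[ℝ] H be linear maps with A symmetric (⟪A u, v⟫ = ⟪u, A v⟫ for all u, v ∈ H). Assume the integration-by-parts identity: for all u, v ∈ W_h, ⟪tan u, nor v⟫ − ⟪tan v, nor u⟫ = ⟪D u, v⟫ − ⟪u, D v⟫. Suppose for i = 1, 2 that wᵢ ∈ W_h and (t̂ᵢ, n̂ᵢ) ∈ T × T satisfy the variational equation: for all w ∈ W_h, ⟪wᵢ, D w⟫ + ⟪t̂ᵢ, nor w⟫ − ⟪tan w, n̂ᵢ⟫ = ⟪A wᵢ, w⟫. Then ⟪t̂₁ − tan w₁, n̂₂ − nor w₂⟫ − ⟪t̂₂ − tan w₂, n̂₁ − nor w₁⟫ = ⟪t̂₁, n̂₂⟫ − ⟪t̂₂, n̂₁⟫. In particular, the multisymplecticity condition ⟪t̂₁, n̂₂⟫ − ⟪t̂₂, n̂₁⟫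 = 0 holds if and only if ⟪t̂₁ − tan w₁, n̂₂ − nor w₂⟫ − ⟪t̂₂ − tan w₂, n̂₁ − nor w₁⟫ = 0. -/
open scoped RealInnerProductSpace

/-!
Write `[x, y]` for the bracket of trace pairs and `tr w = (tan w, nor w)`. Expanding the bracket of
the jumps bilinearly, the claim is that the cross terms `[x₁, tr w₂] + [tr w₁, x₂]` add up to
`[tr w₁, tr w₂]`. Testing each variational equation with the other variation evaluates the cross
terms; symmetry of `A` cancels its contribution, and what remains is the right-hand side of the
integration-by-parts identity.
-/

theorem map_sub_sub_eq_map_iff {R M N P : Type*} [CommSemiring R] [AddCommGroup M]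
    [AddCommGroup N] [AddCommGroup P] [Module R M] [Module R N] [Module R P]
    (B : M →ₗ[R] N →ₗ[R] P) (x₁ y₁ : M) (x₂ y₂ : N) :
    B (x₁ - y₁) (x₂ - y₂) = B x₁ x₂ ↔ B x₁ y₂ + B y₁ x₂ = B y₁ y₂ := by
  have expand : B (x₁ - y₁) (x₂ - y₂) = B x₁ x₂ - (B x₁ y₂ + B y₁ x₂ - B y₁ y₂) := by
    simp only [map_sub, LinearMap.sub_apply]
    abel
  rw [expand, sub_eq_self, sub_eq_zero]

section TraceBracket

variable {T : Type*} [SeminormedAddCommGroup T] [InnerProductSpace ℝ T]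

/-- The bracket `[x, y] = ⟪x_tan, y_nor⟫ - ⟪y_tan, x_nor⟫` of pairs of traces, as a bilinear form.
A pair lists the tangential trace first and the normal trace second. -/
noncomputable def traceBracket : LinearMap.BilinForm ℝ (T × T) :=
  (innerₗ T).compl₁₂ (.fst ℝ T T) (.snd ℝ T T) -
    ((innerₗ T).compl₁₂ (.fst ℝ T T) (.snd ℝ T T)).flip

theorem traceBracket_apply (x y : T × T) :
    traceBracket x y = ⟪x.1, y.2⟫ - ⟪y.1, x.2⟫ := rfl

theorem traceBracket_isAlt : (traceBracket (T := T)).IsAlt := fun _ => sub_self _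

end TraceBracket

section FirstVariation

variable {H T : Type*} [SeminormedAddCommGroup H] [InnerProductSpace ℝ H]
  [SeminormedAddCommGroup T] [InnerProductSpace ℝ T]
  {W : Set H} {tr : H → T × T} {D A : H → H} {w w₁ w₂ v : H} {x x₁ x₂ : T × T}

/-- `w ∈ W` together with the approximate traces `x = (t̂, n̂)` is a first variation of the hybrid
method: it solves the variational equation linearized by `A`, tested against all of `W`. The map
`tr` sends a form to its pair of tangential and normal traces. -/
structure IsFirstVariation (W : Set H) (tr : H → T × T) (D A : H → H) (w : H) (x : T × T) :
    Prop where
  mem : w ∈ W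
  variational_eq : ∀ v ∈ W, ⟪w, D v⟫ + ⟪x.1, (tr v).2⟫ - ⟪(tr v).1, x.2⟫ = ⟪A w, v⟫

namespace IsFirstVariation

theorem traceBracket_trace (h : IsFirstVariation W tr D A w x) (hv : v ∈ W) :
    traceBracket x (tr v) = ⟪A w, v⟫ - ⟪w, D v⟫ := by
  rw [traceBracket_apply, ← h.variational_eq v hv]
  ring

theorem traceBracket_trace_add_traceBracket
    (hA : ∀ u ∈ W, ∀ v ∈ W, ⟪A u, v⟫ = ⟪u, A v⟫)
    (h₁ : IsFirstVariation W tr D A w₁ x₁) (h₂ : IsFirstVariation W tr D A w₂ x₂) :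
    traceBracket x₁ (tr w₂) + traceBracket (tr w₁) x₂ = ⟪D w₁, w₂⟫ - ⟪w₁, D w₂⟫ :=
  calc
    traceBracket x₁ (tr w₂) + traceBracket (tr w₁) x₂
      = traceBracket x₁ (tr w₂) - traceBracket x₂ (tr w₁) := by
        rw [← traceBracket_isAlt.neg_eq x₂ (tr w₁), sub_eq_add_neg]
    _ = (⟪A w₁, w₂⟫ - ⟪w₁, D w₂⟫) - (⟪A w₂, w₁⟫ - ⟪w₂, D w₁⟫) := by
        rw [h₁.traceBracket_trace h₂.mem, h₂.traceBracket_trace h₁.mem]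
    _ = ⟪D w₁, w₂⟫ - ⟪w₁, D w₂⟫ := by
        rw [hA w₁ h₁.mem w₂ h₂.mem, real_inner_comm w₁ (A w₂), real_inner_comm (D w₁) w₂]
        ring

end IsFirstVariation

theorem jump_lemma_general
    (hA : ∀ u ∈ W, ∀ v ∈ W, ⟪A u, v⟫ = ⟪u, A v⟫)
    (hibp : ∀ u ∈ W, ∀ v ∈ W, traceBracket (tr u) (tr v) = ⟪D u, v⟫ - ⟪u, D v⟫)
    (h₁ : IsFirstVariation W tr D A w₁ x₁) (h₂ : IsFirstVariation W tr D A w₂ x₂) :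
    traceBracket (x₁ - tr w₁) (x₂ - tr w₂) = traceBracket x₁ x₂ := by
  rw [map_sub_sub_eq_map_iff, h₁.traceBracket_trace_add_traceBracket hA h₂,
    hibp w₁ h₁.mem w₂ h₂.mem]

end FirstVariation

/-- Jump lemma for multisymplectic hybrid methods: given the integration-by-parts identity
on the local finite element space `W` and the variational equations for two variations
`(wᵢ, t̂ᵢ, n̂ᵢ)` with symmetric `A`, the bracket of the jumps between approximate and actual
traces equals the bracket of the approximate traces; in particular multisymplecticity
`⟪t̂₁, n̂₂⟫ − ⟪t̂₂, n̂₁⟫ = 0` holds iff the bracket of the jumps vanishes. -/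
theorem jump_lemma {H T : Type*}
    [NormedAddCommGroup H] [InnerProductSpace ℝ H]
    [NormedAddCommGroup T] [InnerProductSpace ℝ T]
    (W : Submodule ℝ H)
    (tan nor : H →ₗ[ℝ] T) (D A : H →ₗ[ℝ] H)
    (hA : ∀ u v : H, ⟪A u, v⟫ = ⟪u, A v⟫)
    (hibp : ∀ u ∈ W, ∀ v ∈ W,
      ⟪tan u, nor v⟫ - ⟪tan v, nor u⟫ = ⟪D u, v⟫ - ⟪u, D v⟫)
    (w₁ w₂ : H) (hw₁ : w₁ ∈ W) (hw₂ : w₂ ∈ W)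
    (t1 n1 t2 n2 : T)
    (hvar₁ : ∀ w ∈ W, ⟪w₁, D w⟫ + ⟪t1, nor w⟫ - ⟪tan w, n1⟫ = ⟪A w₁, w⟫)
    (hvar₂ : ∀ w ∈ W, ⟪w₂, D w⟫ + ⟪t2, nor w⟫ - ⟪tan w, n2⟫ = ⟪A w₂, w⟫) :
    (⟪t1 - tan w₁, n2 - nor w₂⟫ - ⟪t2 - tan w₂, n1 - nor w₁⟫ = ⟪t1, n2⟫ - ⟪t2, n1⟫)
    ∧ ((⟪t1, n2⟫ - ⟪t2, n1⟫ = 0) ↔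
        (⟪t1 - tan w₁, n2 - nor w₂⟫ - ⟪t2 - tan w₂, n1 - nor w₁⟫ = 0)) := by
  have key := jump_lemma_general (tr := fun w => (tan w, nor w)) (x₁ := (t1, n1))
    (x₂ := (t2, n2)) (fun u _ v _ => hA u v) hibp ⟨hw₁, hvar₁⟩ ⟨hw₂, hvar₂⟩
  exact ⟨key, Eq.congr_left key.symm⟩
end

section
/- Multisymplecticity of the conforming (AFW-H) local flux function: let T be a real inner product space with submodules Ŵnor, Ŵtan, Wtan, Wnor ⊆ T satisfying Wnor ≤ Ŵnor ⊔ (Wtan ⊔ Ŵtan)ᗮ, where ᗮ denotes the orthogonal complement in T. Suppose for i = 1, 2 we are given t̂ᵢ ∈ Ŵtan, n̂ᵢ ∈ Ŵnor, sᵢ ∈ Wtan, mᵢ ∈ Wnor such that ⟪t̂ᵢ − sᵢ, v⟫ = 0 for all v ∈ Ŵnor. Then the multisymplecticity identity holds: ⟪t̂₁ − s₁, n̂₂ − m₂⟫ = ⟪t̂₂ − s₂, n̂₁ − m₁⟫. -/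
open scoped RealInnerProductSpace

section Orthogonality

variable {𝕜 T : Type*} [RCLike 𝕜] [NormedAddCommGroup T] [InnerProductSpace 𝕜 T]

theorem orthogonal_inf_le_orthogonal_sup_orthogonal (U K : Submodule 𝕜 T) :
    Uᗮ ⊓ K ≤ (U ⊔ Kᗮ)ᗮ :=
  calc
    Uᗮ ⊓ K ≤ Uᗮ ⊓ Kᗮᗮ := inf_le_inf_left _ K.le_orthogonal_orthogonal
    _ = (U ⊔ Kᗮ)ᗮ := U.inf_orthogonal Kᗮ

theorem afw_h_flux_multisymplectic_general {Whatnor Whattan Wtan Wnor : Submodule 𝕜 T}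
    (hsub : Wnor ≤ Whatnor ⊔ (Wtan ⊔ Whattan)ᗮ) {t n s m : T}
    (ht : t ∈ Whattan) (hn : n ∈ Whatnor) (hs : s ∈ Wtan) (hm : m ∈ Wnor)
    (hflux : ∀ v ∈ Whatnor, inner 𝕜 (t - s) v = 0) :
    inner 𝕜 (t - s) (n - m) = 0 := by
  have tan_jump_mem : t - s ∈ Wtan ⊔ Whattan :=
    sub_mem (Submodule.mem_sup_right ht) (Submodule.mem_sup_left hs)
  have tan_jump_orthogonal : t - s ∈ (Whatnor ⊔ (Wtan ⊔ Whattan)ᗮ)ᗮ :=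
    orthogonal_inf_le_orthogonal_sup_orthogonal _ _
      ⟨(Submodule.mem_orthogonal' _ _).mpr hflux, tan_jump_mem⟩
  have nor_jump_mem : n - m ∈ Whatnor ⊔ (Wtan ⊔ Whattan)ᗮ :=
    sub_mem (Submodule.mem_sup_left hn) (hsub hm)
  exact Submodule.inner_left_of_mem_orthogonal nor_jump_mem tan_jump_orthogonal

end Orthogonality

/-- Multisymplecticity of the conforming (AFW-H) local flux function
`Φ(z, ẑ) = ẑ^tan − z^tan`: if `Wnor ≤ Ŵnor ⊔ (Wtan ⊔ Ŵtan)ᗮ` and the flux equations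
`⟪t̂ᵢ − sᵢ, v⟫ = 0` for all `v ∈ Ŵnor` hold for two variations, then the bracket of the
trace jumps vanishes. -/
theorem afw_h_flux_multisymplectic {T : Type*}
    [NormedAddCommGroup T] [InnerProductSpace ℝ T]
    (Whatnor Whattan Wtan Wnor : Submodule ℝ T)
    (hsub : Wnor ≤ Whatnor ⊔ (Wtan ⊔ Whattan)ᗮ)
    (t1 t2 : T) (ht1 : t1 ∈ Whattan) (ht2 : t2 ∈ Whattan)
    (n1 n2 : T) (hn1 : n1 ∈ Whatnor) (hn2 : n2 ∈ Whatnor)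
    (s1 s2 : T) (hs1 : s1 ∈ Wtan) (hs2 : s2 ∈ Wtan)
    (m1 m2 : T) (hm1 : m1 ∈ Wnor) (hm2 : m2 ∈ Wnor)
    (h1 : ∀ v ∈ Whatnor, ⟪t1 - s1, v⟫ = 0)
    (h2 : ∀ v ∈ Whatnor, ⟪t2 - s2, v⟫ = 0) :
    ⟪t1 - s1, n2 - m2⟫ = ⟪t2 - s2, n1 - m1⟫ := by
  rw [afw_h_flux_multisymplectic_general hsub ht1 hn2 hs1 hm2 h1,
    afw_h_flux_multisymplectic_general hsub ht2 hn1 hs2 hm1 h2]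
end

section
/- Multisymplecticity of the LDG-H local flux function: let T be a real inner product space with submodules Ŵnor, Ŵtan, Wtan, Wnor ⊆ T satisfying Wtan ⊔ Ŵtan ≤ Ŵnor, and let α : T →ₗ[ℝ] T be a symmetric linear operator (⟪α x, y⟫ = ⟪x, α y⟫ for all x, y ∈ T). Suppose for i = 1, 2 we are given t̂ᵢ ∈ Ŵtan, n̂ᵢ ∈ Ŵnor, sᵢ ∈ Wtan, mᵢ ∈ Wnor such that ⟪(n̂ᵢ − mᵢ) + α (t̂ᵢ − sᵢ), v⟫ = 0 for all v ∈ Ŵnor. Then the multisymplecticity identity holds: ⟪t̂₁ − s₁, n̂₂ − m₂⟫ = ⟪t̂₂ − s₂, n̂₁ − m₁⟫. -/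
open scoped RealInnerProductSpace

section

open scoped InnerProductSpace

variable {𝕜 E : Type*} [RCLike 𝕜] [SeminormedAddCommGroup E] [InnerProductSpace 𝕜 E]

theorem inner_eq_inner_of_inner_add_isSymmetric_eq_zero {α : E →ₗ[𝕜] E} (hα : α.IsSymmetric)
    {x₁ x₂ y₁ y₂ : E} (h₁ : ⟪y₁ + α x₁, x₂⟫_𝕜 = 0) (h₂ : ⟪x₁, y₂ + α x₂⟫_𝕜 = 0) :
    ⟪x₁, y₂⟫_𝕜 = ⟪y₁, x₂⟫_𝕜 := by
  rw [inner_add_left] at h₁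
  rw [inner_add_right] at h₂
  calc ⟪x₁, y₂⟫_𝕜 = -⟪x₁, α x₂⟫_𝕜 := eq_neg_of_add_eq_zero_left h₂
    _ = -⟪α x₁, x₂⟫_𝕜 := by rw [hα x₁ x₂]
    _ = ⟪y₁, x₂⟫_𝕜 := (eq_neg_of_add_eq_zero_left h₁).symm

theorem ldg_h_flux_multisymplectic_general {Whatnor Whattan Wtan : Submodule 𝕜 E}
    (hsub : Wtan ⊔ Whattan ≤ Whatnor) {α : E →ₗ[𝕜] E} (hα : α.IsSymmetric)
    {t₁ t₂ : E} (ht₁ : t₁ ∈ Whattan) (ht₂ : t₂ ∈ Whattan)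
    {s₁ s₂ : E} (hs₁ : s₁ ∈ Wtan) (hs₂ : s₂ ∈ Wtan) {n₁ n₂ m₁ m₂ : E}
    (h₁ : ∀ v ∈ Whatnor, ⟪(n₁ - m₁) + α (t₁ - s₁), v⟫_𝕜 = 0)
    (h₂ : ∀ v ∈ Whatnor, ⟪(n₂ - m₂) + α (t₂ - s₂), v⟫_𝕜 = 0) :
    ⟪t₁ - s₁, n₂ - m₂⟫_𝕜 = ⟪n₁ - m₁, t₂ - s₂⟫_𝕜 := by
  obtain ⟨hWtan, hWhattan⟩ := sup_le_iff.mp hsub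
  have tangential_jump_mem {t s : E} (ht : t ∈ Whattan) (hs : s ∈ Wtan) : t - s ∈ Whatnor :=
    Whatnor.sub_mem (hWhattan ht) (hWtan hs)
  -- Each flux equation is tested against the tangential jump of the other variation.
  exact inner_eq_inner_of_inner_add_isSymmetric_eq_zero hα
    (h₁ _ (tangential_jump_mem ht₂ hs₂))
    (inner_eq_zero_symm.mp (h₂ _ (tangential_jump_mem ht₁ hs₁)))

end

/-- Multisymplecticity of the LDG-H local flux function
`Φ(z, ẑ) = (ẑ^nor − z^nor) + α(ẑ^tan − z^tan)`: if `Wtan ⊔ Ŵtan ≤ Ŵnor`, `α` is a symmetric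
operator, and the flux equations `⟪(n̂ᵢ − mᵢ) + α(t̂ᵢ − sᵢ), v⟫ = 0` for all `v ∈ Ŵnor` hold
for two variations, then the bracket of the trace jumps vanishes. -/
theorem ldg_h_flux_multisymplectic {T : Type*}
    [NormedAddCommGroup T] [InnerProductSpace ℝ T]
    (Whatnor Whattan Wtan Wnor : Submodule ℝ T)
    (hsub : Wtan ⊔ Whattan ≤ Whatnor)
    (α : T →ₗ[ℝ] T) (hα : ∀ x y : T, ⟪α x, y⟫ = ⟪x, α y⟫)
    (t1 t2 : T) (ht1 : t1 ∈ Whattan) (ht2 : t2 ∈ Whattan)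
    (n1 n2 : T) (hn1 : n1 ∈ Whatnor) (hn2 : n2 ∈ Whatnor)
    (s1 s2 : T) (hs1 : s1 ∈ Wtan) (hs2 : s2 ∈ Wtan)
    (m1 m2 : T) (hm1 : m1 ∈ Wnor) (hm2 : m2 ∈ Wnor)
    (h1 : ∀ v ∈ Whatnor, ⟪(n1 - m1) + α (t1 - s1), v⟫ = 0)
    (h2 : ∀ v ∈ Whatnor, ⟪(n2 - m2) + α (t2 - s2), v⟫ = 0) :
    ⟪t1 - s1, n2 - m2⟫ = ⟪t2 - s2, n1 - m1⟫ := by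
  rw [real_inner_comm (n1 - m1)]
  exact ldg_h_flux_multisymplectic_general hsub hα ht1 ht2 hs1 hs2 h1 h2
end

section
/- Strong multisymplecticity from local multisymplecticity and single-valued traces: let H be a real inner product space, ι a finite type, σ : ι → ι an involution (σ ∘ σ = id), E a type, and el : ι → E. Let t₁, t₂, a₁, a₂ : ι → H, and define the facet bracket b i := ⟪t₁ i, a₂ i⟫ − ⟪t₂ i, a₁ i⟫. Assume: (local multisymplecticity) for every K : E, the sum of b i over all i with el i = K is zero; and (single-valuedness) for every i with σ i ≠ i and each j ∈ {1, 2}, t_j (σ i) = t_j i and a_j (σ i) = − a_j i. Then for every set (or finite subset) 𝒦 of E, the sum of b i over all sides i such that el i ∈ 𝒦 and (σ i = i or el (σ i) ∉ 𝒦) equals zero. -/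
open scoped RealInnerProductSpace

/-!
The bracket of a union of elements, summed over all of its sides, vanishes because it vanishes on
each element. Single-valuedness makes the brackets on the two sides of an interior facet opposite,
so the facets with both sides in the union cancel, leaving the sum over the boundary sides.
-/

section SideSums

variable {ι E M : Type*} [AddCommMonoid M] {b : ι → M}

theorem sum_filter_univ_eq_finsum [Fintype ι] (p : ι → Prop) [DecidablePred p] (f : ι → M) :
    ∑ i with p i, f i = ∑ᶠ (i) (_ : p i), f i :=
  (finsum_cond_eq_sum_of_cond_iff f fun _ => by rw [Finset.mem_filter_univ]).symm

theorem sum_filter_fixed_or_notMem_eq_sum [DecidableEq ι] {σ : ι → ι}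
    (hσ : Function.Involutive σ) {s : Finset ι}
    (hb : ∀ i ∈ s, σ i ∈ s → σ i ≠ i → b i + b (σ i) = 0) :
    ∑ i ∈ s with σ i = i ∨ σ i ∉ s, b i = ∑ i ∈ s, b i := by
  have paired_sum : ∑ i ∈ s with ¬(σ i = i ∨ σ i ∉ s), b i = 0 := by
    have mem_paired {i : ι} :
        i ∈ s.filter (fun i => ¬(σ i = i ∨ σ i ∉ s)) ↔ i ∈ s ∧ σ i ≠ i ∧ σ i ∈ s := by
      simp only [Finset.mem_filter, not_or, not_not, ne_eq]
    refine Finset.sum_involution (fun i _ => σ i) (fun i hi => ?_)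
      (fun i hi _ => (mem_paired.1 hi).2.1) (fun i hi => ?_) (fun i _ => hσ i)
    · obtain ⟨his, hne, hσis⟩ := mem_paired.1 hi
      exact hb i his hσis hne
    · obtain ⟨his, hne, hσis⟩ := mem_paired.1 hi
      exact mem_paired.2 ⟨hσis, by rwa [hσ i, ne_comm], by rwa [hσ i]⟩
  rw [← Finset.sum_filter_add_sum_filter_not s (fun i => σ i = i ∨ σ i ∉ s), paired_sum, add_zero]

theorem sum_eq_zero_of_finsum_fiber_eq_zero {el : ι → E} {𝒦 : Set E} {s : Finset ι}
    (hs : ∀ i, i ∈ s ↔ el i ∈ 𝒦) (hfiber : ∀ K ∈ 𝒦, ∑ᶠ (i) (_ : el i = K), b i = 0) :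
    ∑ i ∈ s, b i = 0 := by
  classical
  rw [← Finset.sum_fiberwise_of_maps_to (fun i hi => Finset.mem_image_of_mem el hi)]
  refine Finset.sum_eq_zero fun K hK => ?_
  obtain ⟨j, hj, rfl⟩ := Finset.mem_image.1 hK
  have hKmem : el j ∈ 𝒦 := (hs j).1 hj
  rw [← hfiber (el j) hKmem]
  refine (finsum_cond_eq_sum_of_cond_iff b fun {i} _ => ?_).symm
  rw [Finset.mem_filter, hs]
  exact ⟨fun h => ⟨h ▸ hKmem, h⟩, And.right⟩

theorem strong_multisymplecticity_general {σ : ι → ι} (hσ : Function.Involutive σ) {el : ι → E}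
    {𝒦 : Set E} (hfin : (el ⁻¹' 𝒦).Finite)
    (hlocal : ∀ K ∈ 𝒦, ∑ᶠ (i) (_ : el i = K), b i = 0)
    (hb : ∀ i, σ i ≠ i → b i + b (σ i) = 0) :
    ∑ᶠ (i) (_ : el i ∈ 𝒦 ∧ (σ i = i ∨ el (σ i) ∉ 𝒦)), b i = 0 := by
  classical
  have mem_sides (i : ι) : i ∈ hfin.toFinset ↔ el i ∈ 𝒦 := hfin.mem_toFinset
  calc ∑ᶠ (i) (_ : el i ∈ 𝒦 ∧ (σ i = i ∨ el (σ i) ∉ 𝒦)), b i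
      = ∑ i ∈ hfin.toFinset with σ i = i ∨ σ i ∉ hfin.toFinset, b i :=
        finsum_cond_eq_sum_of_cond_iff b fun _ => by simp only [Finset.mem_filter, mem_sides]
    _ = ∑ i ∈ hfin.toFinset, b i :=
        sum_filter_fixed_or_notMem_eq_sum hσ fun i _ _ => hb i
    _ = 0 := sum_eq_zero_of_finsum_fiber_eq_zero mem_sides hlocal

end SideSums

theorem inner_neg_right_sub_inner_neg_right {𝕜 H : Type*} [RCLike 𝕜] [SeminormedAddCommGroup H]
    [InnerProductSpace 𝕜 H] (t₁ t₂ a₁ a₂ : H) :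
    inner 𝕜 t₁ (-a₂) - inner 𝕜 t₂ (-a₁) = -(inner 𝕜 t₁ a₂ - inner 𝕜 t₂ a₁) := by
  rw [inner_neg_right, inner_neg_right, neg_sub_neg, neg_sub]

/-- Strong multisymplecticity from local multisymplecticity and single-valued traces:
`ι` indexes facet-sides of a mesh, `el` assigns elements, `σ` pairs the two sides of each
interior facet (with `σ i = i` on the global boundary). If the facet bracket
`b i = ⟪t₁ i, a₂ i⟫ − ⟪t₂ i, a₁ i⟫` sums to zero over each element, and tangential traces
agree (resp. normal traces are opposite) across interior facets, then for any collection
`𝒦` of elements the bracket summed over the boundary sides of `𝒦` vanishes. -/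
theorem strong_multisymplecticity {H E ι : Type*}
    [NormedAddCommGroup H] [InnerProductSpace ℝ H]
    [Fintype ι] [DecidableEq ι] [DecidableEq E]
    (σ : ι → ι) (hσ : σ ∘ σ = id)
    (el : ι → E)
    (t₁ t₂ a₁ a₂ : ι → H)
    (hlocal : ∀ K : E,
      ∑ i ∈ Finset.univ.filter (fun i => el i = K),
        (⟪t₁ i, a₂ i⟫ - ⟪t₂ i, a₁ i⟫) = 0)
    (ht₁ : ∀ i, σ i ≠ i → t₁ (σ i) = t₁ i)
    (ht₂ : ∀ i, σ i ≠ i → t₂ (σ i) = t₂ i)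
    (ha₁ : ∀ i, σ i ≠ i → a₁ (σ i) = - a₁ i)
    (ha₂ : ∀ i, σ i ≠ i → a₂ (σ i) = - a₂ i)
    (𝒦 : Finset E) :
    ∑ i ∈ Finset.univ.filter (fun i => el i ∈ 𝒦 ∧ (σ i = i ∨ el (σ i) ∉ 𝒦)),
      (⟪t₁ i, a₂ i⟫ - ⟪t₂ i, a₁ i⟫) = 0 := by
  simp only [sum_filter_univ_eq_finsum] at hlocal ⊢
  refine strong_multisymplecticity_general (𝒦 := 𝒦) (fun i => congrFun hσ i) (Set.toFinite _)
    (fun K _ => hlocal K) fun i hi => ?_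
  rw [ht₁ i hi, ht₂ i hi, ha₁ i hi, ha₂ i hi, inner_neg_right_sub_inner_neg_right, add_neg_cancel]
end

section
/- Multisymplecticity of the LDG-H method (local part): let T be a real inner product space and α : T →ₗ[ℝ] T a symmetric linear operator (⟪α x, y⟫ = ⟪x, α y⟫ for all x, y). Suppose for i = 1, 2 we are given t̂ᵢ, n̂ᵢ, sᵢ, mᵢ ∈ T such that ⟪(n̂ᵢ − mᵢ) + α (t̂ᵢ − sᵢ), v⟫ = 0 for every v ∈ T. Then: (a) the flux relation holds strongly, n̂ᵢ − mᵢ = − α (t̂ᵢ − sᵢ) for i = 1, 2; and (b) the multisymplecticity identity holds: ⟪t̂₁ − s₁, n̂₂ − m₂⟫ = ⟪t̂₂ − s₂, n̂₁ − m₁⟫. -/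
open scoped RealInnerProductSpace

theorem eq_neg_of_forall_inner_add_eq_zero (𝕜 : Type*) {E : Type*} [RCLike 𝕜]
    [NormedAddCommGroup E] [InnerProductSpace 𝕜 E] {x y : E}
    (h : ∀ v : E, inner 𝕜 (x + y) v = 0) : x = -y :=
  eq_neg_of_add_eq_zero_left <| ext_inner_right 𝕜 fun v => by rw [h v, inner_zero_left]

theorem real_inner_apply_comm_of_isSymmetric {E : Type*}
    [SeminormedAddCommGroup E] [InnerProductSpace ℝ E] {A : E →ₗ[ℝ] E}
    (hA : A.IsSymmetric) (x y : E) : ⟪x, A y⟫ = ⟪y, A x⟫ :=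
  calc
    ⟪x, A y⟫ = ⟪A x, y⟫ := (hA x y).symm
    _ = ⟪y, A x⟫ := real_inner_comm _ _

/-- Multisymplecticity of the LDG-H method (local part): since the approximate normal trace
space is all of `T`, the flux equation `⟪(n̂ᵢ − mᵢ) + α(t̂ᵢ − sᵢ), v⟫ = 0` for every `v : T`
enforces the flux relation `n̂ᵢ − mᵢ = −α(t̂ᵢ − sᵢ)` strongly, and the multisymplecticity
identity for the trace jumps holds. -/
theorem ldg_h_multisymplectic {T : Type*}
    [NormedAddCommGroup T] [InnerProductSpace ℝ T]
    (α : T →ₗ[ℝ] T) (hα : ∀ x y : T, ⟪α x, y⟫ = ⟪x, α y⟫)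
    (t1 n1 s1 m1 t2 n2 s2 m2 : T)
    (h1 : ∀ v : T, ⟪(n1 - m1) + α (t1 - s1), v⟫ = 0)
    (h2 : ∀ v : T, ⟪(n2 - m2) + α (t2 - s2), v⟫ = 0) :
    (n1 - m1 = - α (t1 - s1) ∧ n2 - m2 = - α (t2 - s2))
    ∧ ⟪t1 - s1, n2 - m2⟫ = ⟪t2 - s2, n1 - m1⟫ := by
  have flux1 : n1 - m1 = -α (t1 - s1) := eq_neg_of_forall_inner_add_eq_zero ℝ h1
  have flux2 : n2 - m2 = -α (t2 - s2) := eq_neg_of_forall_inner_add_eq_zero ℝ h2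
  refine ⟨⟨flux1, flux2⟩, ?_⟩
  calc
    ⟪t1 - s1, n2 - m2⟫ = -⟪t1 - s1, α (t2 - s2)⟫ := by rw [flux2, inner_neg_right]
    _ = -⟪t2 - s2, α (t1 - s1)⟫ := by rw [real_inner_apply_comm_of_isSymmetric hα]
    _ = ⟪t2 - s2, n1 - m1⟫ := by rw [flux1, inner_neg_right]
end

section
/- Multisymplecticity of the IP-H method for the semilinear Hodge–Laplace problem (local part): let H₋, H₀, H₊ and T₋, T₀ be real inner product spaces, with linear maps δ : H₀ →ₗ H₋, d : H₀ →ₗ H₊, tan₋ : H₋ →ₗ T₋, nor₀ : H₀ →ₗ T₋, tan₀ : H₀ →ₗ T₀, nor₊ : H₊ →ₗ T₀, submodules W₋ ≤ H₋, W₀ ≤ H₀, W₊ ≤ H₊ with δ(W₀) ⊆ W₋ and d(W₀) ⊆ W₊, and symmetric linear operators α₋ : T₋ →ₗ T₋, α₀ : T₀ →ₗ T₀. Suppose for i = 1, 2 we have τᵢ ∈ W₋, vᵢ ∈ W₀, ηᵢ ∈ W₊ and τ̂ᵗᵢ ∈ T₋, v̂ⁿᵢ ∈ T₋, v̂ᵗᵢ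 ∈ T₀, η̂ⁿᵢ ∈ T₀ satisfying: (flux 1) v̂ⁿᵢ = nor₀ vᵢ − α₋ (τ̂ᵗᵢ − tan₋ (δ vᵢ)); (flux 2) η̂ⁿᵢ = nor₊ (d vᵢ) − α₀ (v̂ᵗᵢ − tan₀ vᵢ); (var τ) for all τ ∈ W₋, ⟪τᵢ − δ vᵢ, τ⟫ + ⟪v̂ⁿᵢ − nor₀ vᵢ, tan₋ τ⟫ = 0; (var η) for all η ∈ W₊, ⟪ηᵢ − d vᵢ, η⟫ − ⟪v̂ᵗᵢ − tan₀ vᵢ, nor₊ η⟫ = 0. Then ⟪τ̂ᵗ₁ − tan₋ τ₁, v̂ⁿ₂ − nor₀ v₂⟫ + ⟪v̂ᵗ₁ − tan₀ v₁, η̂ⁿ₂ − nor₊ η₂⟫ = ⟪τ̂ᵗ₂ − tan₋ τ₂, v̂ⁿ₁ − nor₀ v₁⟫ + ⟪v̂ᵗ₂ − tan₀ v₂, η̂ⁿ₁ − nor₊ η₁⟫. -/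
open scoped RealInnerProductSpace

/-!
Say that `r ∈ W` lifts a boundary datum `x` if `⟪r, w⟫ = ⟪x, tr w⟫` for all `w ∈ W`. On `W` the
lifting is the adjoint of the trace `tr`, so lifting followed by the trace is a symmetric operation.
The inclusions `δ W₀ ⊆ W₋` and `d W₀ ⊆ W₊` put the residuals `τ - δ v` and `η - d v` into the test
spaces, and the linearized local equations then say that these residuals lift `nor₀ v - v̂ⁿ` and
`v̂ᵗ - tan₀ v`. With the flux relations, each of the two pairings of trace jumps becomes a penalty
term plus a lift-and-trace term, and both are symmetric.
-/

section Lifting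

variable {R H T : Type*} [CommRing R] [AddCommGroup H] [Module R H] [AddCommGroup T] [Module R T]
  {B : H →ₗ[R] H →ₗ[R] R} {C : T →ₗ[R] T →ₗ[R] R} {W : Submodule R H} {tr : H →ₗ[R] T} {α : T → T}

/-- `r` is a lifting to the discrete space `W` of the boundary datum `x`, with respect to the
trace `tr`, the pairing `B` on the element and the pairing `C` on its boundary. This is the lifting
of discontinuous Galerkin methods, taken as a relation because a degenerate `B` may admit
no lifting or several. -/
structure IsLifting (B : H →ₗ[R] H →ₗ[R] R) (C : T →ₗ[R] T →ₗ[R] R) (W : Submodule R H)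
    (tr : H →ₗ[R] T) (x : T) (r : H) : Prop where
  mem : r ∈ W
  apply_eq : ∀ w ∈ W, B r w = C x (tr w)

theorem IsLifting.apply_trace_symm (hB : B.IsSymm) {x₁ x₂ : T} {r₁ r₂ : H}
    (h₁ : IsLifting B C W tr x₁ r₁) (h₂ : IsLifting B C W tr x₂ r₂) :
    C x₁ (tr r₂) = C x₂ (tr r₁) :=
  calc
    C x₁ (tr r₂) = B r₁ r₂ := (h₁.apply_eq r₂ h₂.mem).symm
    _ = B r₂ r₁ := hB.eq r₁ r₂
    _ = C x₂ (tr r₁) := h₂.apply_eq r₁ h₁.mem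

theorem apply_symm_of_isSelfAdjoint (hC : C.IsSymm) (hα : C.IsSelfAdjoint α) (x y : T) :
    C x (α y) = C y (α x) :=
  (hα x y).symm.trans (hC.eq (α x) y)

theorem IsLifting.sub_trace_apply_penalty_symm (hB : B.IsSymm) (hC : C.IsSymm)
    (hα : C.IsSelfAdjoint α) {x₁ x₂ : T} {r₁ r₂ : H}
    (h₁ : IsLifting B C W tr (α x₁) r₁) (h₂ : IsLifting B C W tr (α x₂) r₂) :
    C (x₁ - tr r₁) (α x₂) = C (x₂ - tr r₂) (α x₁) :=
  calc
    C (x₁ - tr r₁) (α x₂) = C x₁ (α x₂) - C (α x₂) (tr r₁) := by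
      rw [map_sub, LinearMap.sub_apply, ← hC.eq (tr r₁), RingHom.id_apply]
    _ = C x₂ (α x₁) - C (α x₁) (tr r₂) := by
      rw [apply_symm_of_isSelfAdjoint hC hα, h₂.apply_trace_symm hB h₁]
    _ = C (x₂ - tr r₂) (α x₁) := by
      rw [map_sub, LinearMap.sub_apply, ← hC.eq (tr r₂), RingHom.id_apply]

theorem IsLifting.apply_penalty_add_trace_symm (hB : B.IsSymm) (hC : C.IsSymm)
    (hα : C.IsSelfAdjoint α) {x₁ x₂ : T} {r₁ r₂ : H}
    (h₁ : IsLifting B C W tr x₁ r₁) (h₂ : IsLifting B C W tr x₂ r₂) :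
    C x₁ (α x₂ + tr r₂) = C x₂ (α x₁ + tr r₁) := by
  rw [map_add, map_add, apply_symm_of_isSelfAdjoint hC hα, h₁.apply_trace_symm hB h₂]

theorem tangential_jump_apply_symm (hB : B.IsSymm) (hC : C.IsSymm) (hα : C.IsSelfAdjoint α)
    {τ₁ τ₂ σ₁ σ₂ : H} {t₁ t₂ n₁ n₂ : T} (hmem₁ : τ₁ - σ₁ ∈ W) (hmem₂ : τ₂ - σ₂ ∈ W)
    (hflux₁ : n₁ = -α (t₁ - tr σ₁)) (hflux₂ : n₂ = -α (t₂ - tr σ₂))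
    (hvar₁ : ∀ w ∈ W, B (τ₁ - σ₁) w + C n₁ (tr w) = 0)
    (hvar₂ : ∀ w ∈ W, B (τ₂ - σ₂) w + C n₂ (tr w) = 0) :
    C (t₁ - tr τ₁) n₂ = C (t₂ - tr τ₂) n₁ := by
  have isLifting {τ σ : H} {t n : T} (hmem : τ - σ ∈ W) (hflux : n = -α (t - tr σ))
      (hvar : ∀ w ∈ W, B (τ - σ) w + C n (tr w) = 0) :
      IsLifting B C W tr (α (t - tr σ)) (τ - σ) :=
    ⟨hmem, fun w hw ↦ by simpa [hflux, add_neg_eq_zero] using hvar w hw⟩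
  have jump_eq (t : T) (τ σ : H) : t - tr τ = (t - tr σ) - tr (τ - σ) := by
    rw [map_sub]
    abel
  rw [jump_eq t₁ τ₁ σ₁, jump_eq t₂ τ₂ σ₂, hflux₁, hflux₂, map_neg, map_neg,
    (isLifting hmem₁ hflux₁ hvar₁).sub_trace_apply_penalty_symm hB hC hα
      (isLifting hmem₂ hflux₂ hvar₂)]

theorem apply_normal_jump_symm (hB : B.IsSymm) (hC : C.IsSymm) (hα : C.IsSelfAdjoint α)
    {η₁ η₂ ρ₁ ρ₂ : H} {t₁ t₂ n₁ n₂ : T} (hmem₁ : η₁ - ρ₁ ∈ W) (hmem₂ : η₂ - ρ₂ ∈ W)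
    (hflux₁ : n₁ = tr ρ₁ - α t₁) (hflux₂ : n₂ = tr ρ₂ - α t₂)
    (hvar₁ : ∀ w ∈ W, B (η₁ - ρ₁) w - C t₁ (tr w) = 0)
    (hvar₂ : ∀ w ∈ W, B (η₂ - ρ₂) w - C t₂ (tr w) = 0) :
    C t₁ (n₂ - tr η₂) = C t₂ (n₁ - tr η₁) := by
  have lifting₁ : IsLifting B C W tr t₁ (η₁ - ρ₁) := ⟨hmem₁, fun w hw ↦ sub_eq_zero.mp (hvar₁ w hw)⟩
  have lifting₂ : IsLifting B C W tr t₂ (η₂ - ρ₂) := ⟨hmem₂, fun w hw ↦ sub_eq_zero.mp (hvar₂ w hw)⟩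
  have jump_eq {n t : T} {ρ : H} (η : H) (hflux : n = tr ρ - α t) :
      n - tr η = -(α t + tr (η - ρ)) := by
    rw [hflux, map_sub]
    abel
  rw [jump_eq η₁ hflux₁, jump_eq η₂ hflux₂, map_neg, map_neg,
    lifting₁.apply_penalty_add_trace_symm hB hC hα lifting₂]

end Lifting

theorem ip_h_multisymplectic_general {R Hm H0 Hp Tm T0 : Type*} [CommRing R]
    [AddCommGroup Hm] [Module R Hm] [AddCommGroup Hp] [Module R Hp]
    [AddCommGroup Tm] [Module R Tm] [AddCommGroup T0] [Module R T0]
    {Bm : Hm →ₗ[R] Hm →ₗ[R] R} {Bp : Hp →ₗ[R] Hp →ₗ[R] R}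
    {Cm : Tm →ₗ[R] Tm →ₗ[R] R} {C0 : T0 →ₗ[R] T0 →ₗ[R] R}
    (hBm : Bm.IsSymm) (hBp : Bp.IsSymm) (hCm : Cm.IsSymm) (hC0 : C0.IsSymm)
    {δ : H0 → Hm} {d : H0 → Hp}
    {tanm : Hm →ₗ[R] Tm} {nor0 : H0 → Tm} {tan0 : H0 → T0} {norp : Hp →ₗ[R] T0}
    {Wm : Submodule R Hm} {W0 : Set H0} {Wp : Submodule R Hp}
    (hδW : Set.MapsTo δ W0 Wm) (hdW : Set.MapsTo d W0 Wp)
    {αm : Tm → Tm} (hαm : Cm.IsSelfAdjoint αm) {α0 : T0 → T0} (hα0 : C0.IsSelfAdjoint α0)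
    {τ₁ τ₂ : Hm} {v₁ v₂ : H0} {η₁ η₂ : Hp}
    (hτ₁ : τ₁ ∈ Wm) (hτ₂ : τ₂ ∈ Wm) (hv₁ : v₁ ∈ W0) (hv₂ : v₂ ∈ W0)
    (hη₁ : η₁ ∈ Wp) (hη₂ : η₂ ∈ Wp)
    {τt₁ τt₂ vn₁ vn₂ : Tm} {vt₁ vt₂ ηn₁ ηn₂ : T0}
    (hflux1₁ : vn₁ = nor0 v₁ - αm (τt₁ - tanm (δ v₁)))
    (hflux1₂ : vn₂ = nor0 v₂ - αm (τt₂ - tanm (δ v₂)))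
    (hflux2₁ : ηn₁ = norp (d v₁) - α0 (vt₁ - tan0 v₁))
    (hflux2₂ : ηn₂ = norp (d v₂) - α0 (vt₂ - tan0 v₂))
    (hvarτ₁ : ∀ τ ∈ Wm, Bm (τ₁ - δ v₁) τ + Cm (vn₁ - nor0 v₁) (tanm τ) = 0)
    (hvarτ₂ : ∀ τ ∈ Wm, Bm (τ₂ - δ v₂) τ + Cm (vn₂ - nor0 v₂) (tanm τ) = 0)
    (hvarη₁ : ∀ η ∈ Wp, Bp (η₁ - d v₁) η - C0 (vt₁ - tan0 v₁) (norp η) = 0)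
    (hvarη₂ : ∀ η ∈ Wp, Bp (η₂ - d v₂) η - C0 (vt₂ - tan0 v₂) (norp η) = 0) :
    Cm (τt₁ - tanm τ₁) (vn₂ - nor0 v₂) = Cm (τt₂ - tanm τ₂) (vn₁ - nor0 v₁) ∧
      C0 (vt₁ - tan0 v₁) (ηn₂ - norp η₂) = C0 (vt₂ - tan0 v₂) (ηn₁ - norp η₁) :=
  ⟨tangential_jump_apply_symm hBm hCm hαm
      (Wm.sub_mem hτ₁ (hδW hv₁)) (Wm.sub_mem hτ₂ (hδW hv₂))
      (by rw [hflux1₁, sub_sub_cancel_left]) (by rw [hflux1₂, sub_sub_cancel_left])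
      hvarτ₁ hvarτ₂,
    apply_normal_jump_symm hBp hC0 hα0
      (Wp.sub_mem hη₁ (hdW hv₁)) (Wp.sub_mem hη₂ (hdW hv₂)) hflux2₁ hflux2₂ hvarη₁ hvarη₂⟩

/-- Multisymplecticity of the IP-H method for the semilinear Hodge–Laplace problem
(local part): if `δ W₀ ⊆ W₋` and `d W₀ ⊆ W₊`, the penalties `α₋, α₀` are symmetric, and
two first variations satisfy the strongly-enforced IP-H flux relations together with the
linearized local equations, then the bracket of the trace jumps is symmetric. -/
theorem ip_h_multisymplectic {Hm H0 Hp Tm T0 : Type*}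
    [NormedAddCommGroup Hm] [InnerProductSpace ℝ Hm]
    [NormedAddCommGroup H0] [InnerProductSpace ℝ H0]
    [NormedAddCommGroup Hp] [InnerProductSpace ℝ Hp]
    [NormedAddCommGroup Tm] [InnerProductSpace ℝ Tm]
    [NormedAddCommGroup T0] [InnerProductSpace ℝ T0]
    (δ : H0 →ₗ[ℝ] Hm) (d : H0 →ₗ[ℝ] Hp)
    (tanm : Hm →ₗ[ℝ] Tm) (nor0 : H0 →ₗ[ℝ] Tm)
    (tan0 : H0 →ₗ[ℝ] T0) (norp : Hp →ₗ[ℝ] T0)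
    (Wm : Submodule ℝ Hm) (W0 : Submodule ℝ H0) (Wp : Submodule ℝ Hp)
    (hδW : ∀ v ∈ W0, δ v ∈ Wm) (hdW : ∀ v ∈ W0, d v ∈ Wp)
    (αm : Tm →ₗ[ℝ] Tm) (hαm : ∀ x y : Tm, ⟪αm x, y⟫ = ⟪x, αm y⟫)
    (α0 : T0 →ₗ[ℝ] T0) (hα0 : ∀ x y : T0, ⟪α0 x, y⟫ = ⟪x, α0 y⟫)
    (τ₁ τ₂ : Hm) (v₁ v₂ : H0) (η₁ η₂ : Hp)
    (hτ₁ : τ₁ ∈ Wm) (hτ₂ : τ₂ ∈ Wm)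
    (hv₁ : v₁ ∈ W0) (hv₂ : v₂ ∈ W0)
    (hη₁ : η₁ ∈ Wp) (hη₂ : η₂ ∈ Wp)
    (τt₁ τt₂ vn₁ vn₂ : Tm) (vt₁ vt₂ ηn₁ ηn₂ : T0)
    (hflux1₁ : vn₁ = nor0 v₁ - αm (τt₁ - tanm (δ v₁)))
    (hflux1₂ : vn₂ = nor0 v₂ - αm (τt₂ - tanm (δ v₂)))
    (hflux2₁ : ηn₁ = norp (d v₁) - α0 (vt₁ - tan0 v₁))
    (hflux2₂ : ηn₂ = norp (d v₂) - α0 (vt₂ - tan0 v₂))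
    (hvarτ₁ : ∀ τ ∈ Wm, ⟪τ₁ - δ v₁, τ⟫ + ⟪vn₁ - nor0 v₁, tanm τ⟫ = 0)
    (hvarτ₂ : ∀ τ ∈ Wm, ⟪τ₂ - δ v₂, τ⟫ + ⟪vn₂ - nor0 v₂, tanm τ⟫ = 0)
    (hvarη₁ : ∀ η ∈ Wp, ⟪η₁ - d v₁, η⟫ - ⟪vt₁ - tan0 v₁, norp η⟫ = 0)
    (hvarη₂ : ∀ η ∈ Wp, ⟪η₂ - d v₂, η⟫ - ⟪vt₂ - tan0 v₂, norp η⟫ = 0) :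
    ⟪τt₁ - tanm τ₁, vn₂ - nor0 v₂⟫ + ⟪vt₁ - tan0 v₁, ηn₂ - norp η₂⟫
      = ⟪τt₂ - tanm τ₂, vn₁ - nor0 v₁⟫ + ⟪vt₂ - tan0 v₂, ηn₁ - norp η₁⟫ := by
  obtain ⟨tangential, normal⟩ := ip_h_multisymplectic_general
    isSymm_inner isSymm_inner isSymm_inner isSymm_inner hδW hdW hαm hα0
    hτ₁ hτ₂ hv₁ hv₂ hη₁ hη₂ hflux1₁ hflux1₂ hflux2₁ hflux2₂ hvarτ₁ hvarτ₂ hvarη₁ hvarη₂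
  exact congrArg₂ (· + ·) tangential normal
end

section
/- Multisymplecticity of the primal-hybrid nonconforming method: let H₋, H₀, H₊ and T₋, T₀ be real inner product spaces with linear maps δ : H₀ →ₗ H₋, d : H₀ →ₗ H₊, nor₀ : H₀ →ₗ T₋, tan₀ : H₀ →ₗ T₀, a submodule W₀ ≤ H₀, submodules W̄ᵗ ≤ T₋ and W̄ⁿ ≤ T₀, a symmetric linear operator B : H₀ →ₗ H₀, and symmetric linear operators β : T₋ →ₗ T₋, α : T₀ →ₗ T₀. Suppose for i = 1, 2 we have vᵢ ∈ W₀, τ̄ᵢ ∈ W̄ᵗ, η̄ᵢ ∈ W̄ⁿ, v̂ⁿᵢ ∈ T₋, v̂ᵗᵢ ∈ T₀, and define the numerical fluxes τ̂ᵗᵢ := τ̄ᵢ − β (v̂ⁿᵢ − nor₀ vᵢ) and η̂ⁿᵢ := η̄ᵢ − α (v̂ᵗᵢ − tan₀ vᵢ). Assume: (linearized primal equation) for all v ∈ W₀, ⟪δ vᵢ, δ v⟫ + ⟪d vᵢ, d v⟫ + ⟪τ̂ᵗᵢ, nor₀ v⟫ − ⟪η̂ⁿᵢ, tan₀ v⟫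 = ⟪B vᵢ, v⟫; (orthogonality 1) ⟪v̂ⁿᵢ − nor₀ vᵢ, τ̄⟫ = 0 for all τ̄ ∈ W̄ᵗ; (orthogonality 2) ⟪v̂ᵗᵢ − tan₀ vᵢ, η̄⟫ = 0 for all η̄ ∈ W̄ⁿ. Then ⟪τ̂ᵗ₁, v̂ⁿ₂⟫ + ⟪v̂ᵗ₁, η̂ⁿ₂⟫ = ⟪τ̂ᵗ₂, v̂ⁿ₁⟫ + ⟪v̂ᵗ₂, η̂ⁿ₁⟫. -/
open scoped RealInnerProductSpace

/-!
Testing each linearized primal equation against the other variation and subtracting cancels the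
Hermitian volume terms, so the boundary bracket vanishes when its traces are taken from inside the
element. Passing to the numerical traces adds only brackets of flux against jump: there the reduced
part of the flux drops out by orthogonality, and the penalty part by symmetry of the penalty.
-/

section FluxTrace

variable {𝕜 T : Type*} [RCLike 𝕜] [NormedAddCommGroup T] [InnerProductSpace 𝕜 T]

variable (𝕜) in
/-- The canonical skew-Hermitian form on pairs `(flux, trace)` of boundary values; the boundary
bracket `[ŵ₁, ŵ₂]_{∂K}` is the difference of its values on the normal-trace and tangential-trace
pairs. -/
def fluxTraceBracket (p q : T × T) : 𝕜 :=
  inner 𝕜 p.1 q.2 - inner 𝕜 p.2 q.1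

/-- `p = (σ̂, û)` is a numerical flux and trace of the penalized hybrid method attached to the
interior trace `u`: the flux has the form `σ̄ - β (û - u)` with `σ̄` in the reduced trace space `W`,
and the jump `û - u` is orthogonal to `W`. -/
structure IsHybridTrace (β : T →ₗ[𝕜] T) (W : Submodule 𝕜 T) (u : T) (p : T × T) : Prop where
  flux_add_penalty_mem : p.1 + β (p.2 - u) ∈ W
  jump_mem_orthogonal : p.2 - u ∈ Wᗮ

variable {β : T →ₗ[𝕜] T} {W : Submodule 𝕜 T}

theorem isHybridTrace_sub_penalty {σ u û : T} (hσ : σ ∈ W)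
    (hjump : ∀ τ ∈ W, inner 𝕜 (û - u) τ = 0) :
    IsHybridTrace β W u (σ - β (û - u), û) where
  flux_add_penalty_mem := by simpa only [sub_add_cancel] using hσ
  jump_mem_orthogonal := (W.mem_orthogonal' _).2 hjump

theorem fluxTraceBracket_sub_trace (p q : T × T) (u v : T) :
    fluxTraceBracket 𝕜 (p.1, p.2 - u) (q.1, q.2 - v) =
      fluxTraceBracket 𝕜 p q - fluxTraceBracket 𝕜 (p.1, u) (q.1, v) := by
  simp only [fluxTraceBracket, inner_sub_left, inner_sub_right]
  ring

namespace IsHybridTrace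

variable {u₁ u₂ : T} {p₁ p₂ : T × T}

theorem inner_flux_jump (h₁ : IsHybridTrace β W u₁ p₁) (h₂ : IsHybridTrace β W u₂ p₂) :
    inner 𝕜 p₁.1 (p₂.2 - u₂) = -inner 𝕜 (β (p₁.2 - u₁)) (p₂.2 - u₂) := by
  have reduced_flux_orthogonal : inner 𝕜 (p₁.1 + β (p₁.2 - u₁)) (p₂.2 - u₂) = 0 :=
    W.inner_right_of_mem_orthogonal h₁.flux_add_penalty_mem h₂.jump_mem_orthogonal
  rw [inner_add_left] at reduced_flux_orthogonal
  exact eq_neg_of_add_eq_zero_left reduced_flux_orthogonal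

theorem inner_jump_flux (h₁ : IsHybridTrace β W u₁ p₁) (h₂ : IsHybridTrace β W u₂ p₂) :
    inner 𝕜 (p₁.2 - u₁) p₂.1 = -inner 𝕜 (p₁.2 - u₁) (β (p₂.2 - u₂)) := by
  rw [← inner_conj_symm, h₂.inner_flux_jump h₁, map_neg, inner_conj_symm]

theorem fluxTraceBracket_jump_eq_zero (hβ : β.IsSymmetric) (h₁ : IsHybridTrace β W u₁ p₁)
    (h₂ : IsHybridTrace β W u₂ p₂) :
    fluxTraceBracket 𝕜 (p₁.1, p₁.2 - u₁) (p₂.1, p₂.2 - u₂) = 0 := by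
  rw [fluxTraceBracket, h₁.inner_flux_jump h₂, h₁.inner_jump_flux h₂, hβ, sub_self]

theorem fluxTraceBracket_eq_interior (hβ : β.IsSymmetric) (h₁ : IsHybridTrace β W u₁ p₁)
    (h₂ : IsHybridTrace β W u₂ p₂) :
    fluxTraceBracket 𝕜 p₁ p₂ = fluxTraceBracket 𝕜 (p₁.1, u₁) (p₂.1, u₂) := by
  rw [← sub_eq_zero, ← fluxTraceBracket_sub_trace, fluxTraceBracket_jump_eq_zero hβ h₁ h₂]

end IsHybridTrace

end FluxTrace

section HodgeLaplace

variable {𝕜 Hm H0 Hp : Type*} [RCLike 𝕜]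
  [NormedAddCommGroup Hm] [InnerProductSpace 𝕜 Hm]
  [NormedAddCommGroup H0] [InnerProductSpace 𝕜 H0]
  [NormedAddCommGroup Hp] [InnerProductSpace 𝕜 Hp]

/-- The volume part `⟪δ u, δ v⟫ + ⟪d u, d v⟫ - ⟪B u, v⟫` of the linearized semilinear
Hodge–Laplace equation, with the Hessian term moved to the left-hand side. -/
def hodgeLaplaceForm (δ : H0 →ₗ[𝕜] Hm) (d : H0 →ₗ[𝕜] Hp) (B : H0 →ₗ[𝕜] H0) :
    H0 →ₗ⋆[𝕜] H0 →ₗ[𝕜] 𝕜 :=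
  ((innerₛₗ 𝕜).comp δ).compl₂ δ + ((innerₛₗ 𝕜).comp d).compl₂ d - (innerₛₗ 𝕜).comp B

theorem hodgeLaplaceForm_apply (δ : H0 →ₗ[𝕜] Hm) (d : H0 →ₗ[𝕜] Hp) (B : H0 →ₗ[𝕜] H0)
    (u v : H0) :
    hodgeLaplaceForm δ d B u v = inner 𝕜 (δ u) (δ v) + inner 𝕜 (d u) (d v) - inner 𝕜 (B u) v :=
  rfl

theorem isSymm_hodgeLaplaceForm (δ : H0 →ₗ[𝕜] Hm) (d : H0 →ₗ[𝕜] Hp) {B : H0 →ₗ[𝕜] H0}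
    (hB : B.IsSymmetric) : (hodgeLaplaceForm δ d B).IsSymm where
  eq u v := by
    simp only [hodgeLaplaceForm_apply, map_sub, map_add, inner_conj_symm, hB v u]

end HodgeLaplace

section Multisymplectic

variable {𝕜 H Tm T0 : Type*} [RCLike 𝕜] [AddCommGroup H] [Module 𝕜 H]
  [NormedAddCommGroup Tm] [InnerProductSpace 𝕜 Tm]
  [NormedAddCommGroup T0] [InnerProductSpace 𝕜 T0]
  {a : H →ₗ⋆[𝕜] H →ₗ[𝕜] 𝕜}

theorem fluxTraceBracket_eq_of_primal (ha : a.IsSymm) {v₁ v₂ : H} {τ₁ τ₂ n₁ n₂ : Tm}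
    {η₁ η₂ t₁ t₂ : T0} (h₁ : a v₁ v₂ + inner 𝕜 τ₁ n₂ - inner 𝕜 η₁ t₂ = 0)
    (h₂ : a v₂ v₁ + inner 𝕜 τ₂ n₁ - inner 𝕜 η₂ t₁ = 0) :
    fluxTraceBracket 𝕜 (τ₁, n₁) (τ₂, n₂) = fluxTraceBracket 𝕜 (η₁, t₁) (η₂, t₂) := by
  have h₂_conj : a v₁ v₂ + inner 𝕜 n₁ τ₂ - inner 𝕜 t₁ η₂ = 0 := by
    simpa only [map_sub, map_add, inner_conj_symm, ha.eq, map_zero]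
      using congrArg (starRingEnd 𝕜) h₂
  simp only [fluxTraceBracket]
  linear_combination h₁ - h₂_conj

theorem primal_hybrid_nonconforming_multisymplectic_general (ha : a.IsSymm)
    (nor : H →ₗ[𝕜] Tm) (tan : H →ₗ[𝕜] T0) {W : Submodule 𝕜 H}
    {Wt : Submodule 𝕜 Tm} {Wn : Submodule 𝕜 T0}
    {β : Tm →ₗ[𝕜] Tm} (hβ : β.IsSymmetric) {α : T0 →ₗ[𝕜] T0} (hα : α.IsSymmetric)
    {v₁ v₂ : H} (hv₁ : v₁ ∈ W) (hv₂ : v₂ ∈ W) {p₁ p₂ : Tm × Tm} {q₁ q₂ : T0 × T0}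
    (hp₁ : IsHybridTrace β Wt (nor v₁) p₁) (hp₂ : IsHybridTrace β Wt (nor v₂) p₂)
    (hq₁ : IsHybridTrace α Wn (tan v₁) q₁) (hq₂ : IsHybridTrace α Wn (tan v₂) q₂)
    (hprimal₁ : ∀ v ∈ W, a v₁ v + inner 𝕜 p₁.1 (nor v) - inner 𝕜 q₁.1 (tan v) = 0)
    (hprimal₂ : ∀ v ∈ W, a v₂ v + inner 𝕜 p₂.1 (nor v) - inner 𝕜 q₂.1 (tan v) = 0) :
    fluxTraceBracket 𝕜 p₁ p₂ = fluxTraceBracket 𝕜 q₁ q₂ :=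
  calc
    fluxTraceBracket 𝕜 p₁ p₂
      = fluxTraceBracket 𝕜 (p₁.1, nor v₁) (p₂.1, nor v₂) := hp₁.fluxTraceBracket_eq_interior hβ hp₂
    _ = fluxTraceBracket 𝕜 (q₁.1, tan v₁) (q₂.1, tan v₂) :=
      fluxTraceBracket_eq_of_primal ha (hprimal₁ v₂ hv₂) (hprimal₂ v₁ hv₁)
    _ = fluxTraceBracket 𝕜 q₁ q₂ := (hq₁.fluxTraceBracket_eq_interior hα hq₂).symm

end Multisymplectic

/-- Multisymplecticity of the primal-hybrid nonconforming method: with symmetric Hessian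
`B` and symmetric penalties `β, α`, if two first variations satisfy the linearized primal
equation with numerical fluxes `τ̂ᵗᵢ = τ̄ᵢ − β(v̂ⁿᵢ − nor₀ vᵢ)`, `η̂ⁿᵢ = η̄ᵢ − α(v̂ᵗᵢ − tan₀ vᵢ)`
and the trace orthogonality conditions, then the local multisymplecticity condition
`⟪τ̂ᵗ₁, v̂ⁿ₂⟫ + ⟪v̂ᵗ₁, η̂ⁿ₂⟫ = ⟪τ̂ᵗ₂, v̂ⁿ₁⟫ + ⟪v̂ᵗ₂, η̂ⁿ₁⟫` holds. -/
theorem primal_hybrid_nonconforming_multisymplectic {Hm H0 Hp Tm T0 : Type*}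
    [NormedAddCommGroup Hm] [InnerProductSpace ℝ Hm]
    [NormedAddCommGroup H0] [InnerProductSpace ℝ H0]
    [NormedAddCommGroup Hp] [InnerProductSpace ℝ Hp]
    [NormedAddCommGroup Tm] [InnerProductSpace ℝ Tm]
    [NormedAddCommGroup T0] [InnerProductSpace ℝ T0]
    (δ : H0 →ₗ[ℝ] Hm) (d : H0 →ₗ[ℝ] Hp)
    (nor0 : H0 →ₗ[ℝ] Tm) (tan0 : H0 →ₗ[ℝ] T0)
    (W0 : Submodule ℝ H0)
    (Wbart : Submodule ℝ Tm) (Wbarn : Submodule ℝ T0)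
    (B : H0 →ₗ[ℝ] H0) (hB : ∀ u v : H0, ⟪B u, v⟫ = ⟪u, B v⟫)
    (β : Tm →ₗ[ℝ] Tm) (hβ : ∀ x y : Tm, ⟪β x, y⟫ = ⟪x, β y⟫)
    (α : T0 →ₗ[ℝ] T0) (hα : ∀ x y : T0, ⟪α x, y⟫ = ⟪x, α y⟫)
    (v₁ v₂ : H0) (hv₁ : v₁ ∈ W0) (hv₂ : v₂ ∈ W0)
    (τbar₁ τbar₂ : Tm) (hτbar₁ : τbar₁ ∈ Wbart) (hτbar₂ : τbar₂ ∈ Wbart)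
    (ηbar₁ ηbar₂ : T0) (hηbar₁ : ηbar₁ ∈ Wbarn) (hηbar₂ : ηbar₂ ∈ Wbarn)
    (vn₁ vn₂ : Tm) (vt₁ vt₂ : T0)
    -- numerical fluxes
    (τt₁ τt₂ : Tm) (ηn₁ ηn₂ : T0)
    (hτt₁ : τt₁ = τbar₁ - β (vn₁ - nor0 v₁))
    (hτt₂ : τt₂ = τbar₂ - β (vn₂ - nor0 v₂))
    (hηn₁ : ηn₁ = ηbar₁ - α (vt₁ - tan0 v₁))
    (hηn₂ : ηn₂ = ηbar₂ - α (vt₂ - tan0 v₂))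
    -- linearized primal equation
    (hprimal₁ : ∀ v ∈ W0,
      ⟪δ v₁, δ v⟫ + ⟪d v₁, d v⟫ + ⟪τt₁, nor0 v⟫ - ⟪ηn₁, tan0 v⟫ = ⟪B v₁, v⟫)
    (hprimal₂ : ∀ v ∈ W0,
      ⟪δ v₂, δ v⟫ + ⟪d v₂, d v⟫ + ⟪τt₂, nor0 v⟫ - ⟪ηn₂, tan0 v⟫ = ⟪B v₂, v⟫)
    -- orthogonality
    (horth1₁ : ∀ τ ∈ Wbart, ⟪vn₁ - nor0 v₁, τ⟫ = 0)
    (horth1₂ : ∀ τ ∈ Wbart, ⟪vn₂ - nor0 v₂, τ⟫ = 0)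
    (horth2₁ : ∀ η ∈ Wbarn, ⟪vt₁ - tan0 v₁, η⟫ = 0)
    (horth2₂ : ∀ η ∈ Wbarn, ⟪vt₂ - tan0 v₂, η⟫ = 0) :
    ⟪τt₁, vn₂⟫ + ⟪vt₁, ηn₂⟫ = ⟪τt₂, vn₁⟫ + ⟪vt₂, ηn₁⟫ := by
  subst hτt₁ hτt₂ hηn₁ hηn₂
  have bracket_eq := primal_hybrid_nonconforming_multisymplectic_general
    (isSymm_hodgeLaplaceForm δ d hB) nor0 tan0 hβ hα hv₁ hv₂
    (isHybridTrace_sub_penalty hτbar₁ horth1₁) (isHybridTrace_sub_penalty hτbar₂ horth1₂)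
    (isHybridTrace_sub_penalty hηbar₁ horth2₁) (isHybridTrace_sub_penalty hηbar₂ horth2₂)
    (fun v hv ↦ by linear_combination hodgeLaplaceForm_apply δ d B v₁ v + hprimal₁ v hv)
    (fun v hv ↦ by linear_combination hodgeLaplaceForm_apply δ d B v₂ v + hprimal₂ v hv)
  simp only [fluxTraceBracket] at bracket_eq
  rw [real_inner_comm vn₁, real_inner_comm _ vt₂]
  linear_combination bracket_eq
end

section
/- Equivalence of primal and first-order mixed forms for hybrid methods (σ-equation): let H₋, H₀ and T be real inner product spaces with linear maps d : H₋ →ₗ H₀, δ : H₀ →ₗ H₋, tan : H₋ →ₗ T, nor : H₀ →ₗ T, a submodule W₋ ≤ H₋, and a submodule W̄ ≤ T with tan(W₋) ⊆ W̄. Let u ∈ H₀ with δ u ∈ W₋, let σ ∈ W₋, and let û ∈ T. Assume: (integration by parts) for all τ ∈ W₋, ⟪d τ, u⟫ − ⟪τ, δ u⟫ = ⟪tan τ, nor u⟫; (trace orthogonality) ⟪û − nor u, τ̄⟫ = 0 for all τ̄ ∈ W̄. Then the mixed equation (for all τ ∈ W₋: ⟪u, d τ⟫ − ⟪û, tan τ⟫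 = ⟪σ, τ⟫) holds if and only if σ = δ u. -/
open scoped RealInnerProductSpace

/-!
Since `uhat` and `nor u` agree against the traces of `Wm`, integration by parts shows that `δ u`
solves the mixed equation. The solution in `Wm` is unique because the inner product is definite.
-/

section

open scoped InnerProductSpace

variable {𝕜 : Type*} [RCLike 𝕜]

theorem forall_mem_inner_eq_iff {E : Type*} [NormedAddCommGroup E] [InnerProductSpace 𝕜 E]
    {W : Submodule 𝕜 E} {x y : E} (hx : x ∈ W) (hy : y ∈ W) :
    (∀ w ∈ W, ⟪x, w⟫_𝕜 = ⟪y, w⟫_𝕜) ↔ x = y := by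
  refine ⟨fun h ↦ ?_, fun h _ _ ↦ by rw [h]⟩
  have eq_in_W : (⟨x, hx⟩ : W) = ⟨y, hy⟩ := ext_inner_right 𝕜 fun w ↦ h w w.2
  exact congrArg Subtype.val eq_in_W

section IntegrationByParts

variable {E F G : Type*}
  [SeminormedAddCommGroup E] [InnerProductSpace 𝕜 E]
  [SeminormedAddCommGroup F] [InnerProductSpace 𝕜 F]
  [SeminormedAddCommGroup G] [InnerProductSpace 𝕜 G]
  {τ δu : E} {dτ u : F} {t n : G}

theorem inner_sub_inner_eq_inner_symm (h : ⟪dτ, u⟫_𝕜 - ⟪τ, δu⟫_𝕜 = ⟪t, n⟫_𝕜) :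
    ⟪u, dτ⟫_𝕜 - ⟪δu, τ⟫_𝕜 = ⟪n, t⟫_𝕜 := by
  simpa only [map_sub, inner_conj_symm] using congrArg (starRingEnd 𝕜) h

theorem inner_sub_inner_eq_of_inner_sub_eq_zero {uhat : G}
    (hibp : ⟪dτ, u⟫_𝕜 - ⟪τ, δu⟫_𝕜 = ⟪t, n⟫_𝕜) (horth : ⟪uhat - n, t⟫_𝕜 = 0) :
    ⟪u, dτ⟫_𝕜 - ⟪uhat, t⟫_𝕜 = ⟪δu, τ⟫_𝕜 := by
  have trace_eq : ⟪uhat, t⟫_𝕜 = ⟪n, t⟫_𝕜 := by rwa [← sub_eq_zero, ← inner_sub_left]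
  rw [trace_eq, ← inner_sub_inner_eq_inner_symm hibp, sub_sub_cancel]

end IntegrationByParts

theorem primal_mixed_equivalence_general {Hm H0 T : Type*}
    [NormedAddCommGroup Hm] [InnerProductSpace 𝕜 Hm]
    [SeminormedAddCommGroup H0] [InnerProductSpace 𝕜 H0]
    [SeminormedAddCommGroup T] [InnerProductSpace 𝕜 T]
    (d : Hm → H0) (δ : H0 → Hm) (tan : Hm → T) (nor : H0 → T)
    (Wm : Submodule 𝕜 Hm) (Wbar : Set T) (htan : ∀ τ ∈ Wm, tan τ ∈ Wbar)
    (u : H0) (hu : δ u ∈ Wm) (σ : Hm) (hσ : σ ∈ Wm) (uhat : T)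
    (hibp : ∀ τ ∈ Wm, ⟪d τ, u⟫_𝕜 - ⟪τ, δ u⟫_𝕜 = ⟪tan τ, nor u⟫_𝕜)
    (horth : ∀ τbar ∈ Wbar, ⟪uhat - nor u, τbar⟫_𝕜 = 0) :
    (∀ τ ∈ Wm, ⟪u, d τ⟫_𝕜 - ⟪uhat, tan τ⟫_𝕜 = ⟪σ, τ⟫_𝕜) ↔ σ = δ u := by
  have codifferential_solves (τ : Hm) (hτ : τ ∈ Wm) :
      ⟪u, d τ⟫_𝕜 - ⟪uhat, tan τ⟫_𝕜 = ⟪δ u, τ⟫_𝕜 :=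
    inner_sub_inner_eq_of_inner_sub_eq_zero (hibp τ hτ) (horth _ (htan τ hτ))
  calc (∀ τ ∈ Wm, ⟪u, d τ⟫_𝕜 - ⟪uhat, tan τ⟫_𝕜 = ⟪σ, τ⟫_𝕜)
      ↔ ∀ τ ∈ Wm, ⟪σ, τ⟫_𝕜 = ⟪δ u, τ⟫_𝕜 :=
        forall₂_congr fun τ hτ ↦ by rw [codifferential_solves τ hτ, eq_comm]
    _ ↔ σ = δ u := forall_mem_inner_eq_iff hσ hu

end

/-- Equivalence of primal and first-order mixed forms for hybrid methods (σ-equation):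
if `δ u ∈ W₋`, `tan(W₋) ⊆ W̄`, integration by parts holds on `W₋`, and the approximate
normal trace `û` satisfies the trace orthogonality against `W̄`, then the mixed hybrid
equation `⟪u, dτ⟫ − ⟪û, tan τ⟫ = ⟪σ, τ⟫` for all `τ ∈ W₋` holds iff `σ = δ u`. -/
theorem primal_mixed_equivalence {Hm H0 T : Type*}
    [NormedAddCommGroup Hm] [InnerProductSpace ℝ Hm]
    [NormedAddCommGroup H0] [InnerProductSpace ℝ H0]
    [NormedAddCommGroup T] [InnerProductSpace ℝ T]
    (d : Hm →ₗ[ℝ] H0) (δ : H0 →ₗ[ℝ] Hm)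
    (tan : Hm →ₗ[ℝ] T) (nor : H0 →ₗ[ℝ] T)
    (Wm : Submodule ℝ Hm) (Wbar : Submodule ℝ T)
    (htan : ∀ τ ∈ Wm, tan τ ∈ Wbar)
    (u : H0) (hu : δ u ∈ Wm) (σ : Hm) (hσ : σ ∈ Wm) (uhat : T)
    (hibp : ∀ τ ∈ Wm, ⟪d τ, u⟫ - ⟪τ, δ u⟫ = ⟪tan τ, nor u⟫)
    (horth : ∀ τbar ∈ Wbar, ⟪uhat - nor u, τbar⟫ = 0) :
    (∀ τ ∈ Wm, ⟪u, d τ⟫ - ⟪uhat, tan τ⟫ = ⟪σ, τ⟫) ↔ σ = δ u :=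
  primal_mixed_equivalence_general d δ tan nor Wm Wbar htan u hu σ hσ uhat hibp horth
end

section
/- Lorentz reciprocity for the time-harmonic Maxwell equations: work on E := EuclideanSpace ℝ (Fin 3) and write, for a function f : E → ℂ differentiable at x, ∂ᵢ f (x) := fderiv ℝ f x eᵢ where eᵢ is the i-th standard basis vector; for a vector field F : E → (Fin 3 → ℂ) define curl F (x) := (∂₁F₂... specifically the vector with components (curl F)₀ = ∂₁F₂ − ∂₂F₁ indexed so that (curl F)ᵢ = ∂ⱼFₖ − ∂ₖFⱼ for (i,j,k) a cyclic permutation of (0,1,2), and div F (x) := ∑ᵢ ∂ᵢFᵢ (x); let a ×₃ b denote the cross product on Fin 3 → ℂ and a ⬝ᵥ b := ∑ᵢ aᵢ bᵢ the bilinear dot product. Let ω ∈ ℝ, let ε, μ : Matrix (Fin 3) (Fin 3) ℂ be symmetric matrices (εᵀ = ε, μᵀ = μ), and let E₁, E₂, H₁, H₂, J₁, J₂ : E → (Fin 3 → ℂ) with each component of E₁, E₂, H₁, H₂ differentiable at a point x. Assume the time-harmonic Maxwell equations hold at x for i = 1, 2: curl Eᵢ (x) = −(Complex.I * ω) • μ.mulVec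 (Hᵢ x) and curl Hᵢ (x) = (Complex.I * ω) • ε.mulVec (Eᵢ x) + Jᵢ x. Then div (fun y => (E₁ y) ×₃ (H₂ y)) (x) − (J₁ x) ⬝ᵥ (E₂ x) = div (fun y => (E₂ y) ×₃ (H₁ y)) (x) − (J₂ x) ⬝ᵥ (E₁ x). -/
open Matrix

/-- The `i`-th partial derivative (along the `i`-th standard basis vector) of a
complex-valued function on `ℝ³`. -/
noncomputable def pderivC (i : Fin 3) (f : EuclideanSpace ℝ (Fin 3) → ℂ)
    (x : EuclideanSpace ℝ (Fin 3)) : ℂ :=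
  fderiv ℝ f x (EuclideanSpace.single i 1)

/-- The curl of a complex vector field on `ℝ³`: `(curl F)ᵢ = ∂ⱼFₖ − ∂ₖFⱼ` for `(i, j, k)`
a cyclic permutation of `(0, 1, 2)`. -/
noncomputable def curlC (F : EuclideanSpace ℝ (Fin 3) → Fin 3 → ℂ)
    (x : EuclideanSpace ℝ (Fin 3)) : Fin 3 → ℂ :=
  fun i => pderivC (i + 1) (fun y => F y (i + 2)) x - pderivC (i + 2) (fun y => F y (i + 1)) x

/-- The divergence of a complex vector field on `ℝ³`. -/
noncomputable def divC (F : EuclideanSpace ℝ (Fin 3) → Fin 3 → ℂ)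
    (x : EuclideanSpace ℝ (Fin 3)) : ℂ :=
  ∑ i, pderivC i (fun y => F y i) x

/-!
Let `(E₁, H₁)` solve Maxwell's equations in a medium `ε, μ` and `(E₂, H₂)` in the transposed
medium `εᵀ, μᵀ`. The identity `div (F × G) = curl F ⬝ᵥ G - F ⬝ᵥ curl G` turns
`div (E₁ × H₂) - J₁ ⬝ᵥ E₂` into `-iω (H₂ ⬝ᵥ μ H₁ + E₁ ⬝ᵥ εᵀ E₂) - J₂ ⬝ᵥ E₁ - J₁ ⬝ᵥ E₂`, and
exchanging the two solutions, each with its medium, only moves the transposes across the dot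
products. A symmetric medium is its own transpose.
-/

section PartialDerivatives

variable {f g : EuclideanSpace ℝ (Fin 3) → ℂ} {x : EuclideanSpace ℝ (Fin 3)}

theorem pderivC_sub (i : Fin 3) (hf : DifferentiableAt ℝ f x) (hg : DifferentiableAt ℝ g x) :
    pderivC i (fun y => f y - g y) x = pderivC i f x - pderivC i g x := by
  simp [pderivC, fderiv_fun_sub hf hg]

theorem pderivC_mul (i : Fin 3) (hf : DifferentiableAt ℝ f x) (hg : DifferentiableAt ℝ g x) :
    pderivC i (fun y => f y * g y) x = f x * pderivC i g x + g x * pderivC i f x := by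
  simp [pderivC, fderiv_fun_mul hf hg]

end PartialDerivatives

section VectorFields

theorem curlC_eq_vec3 (F : EuclideanSpace ℝ (Fin 3) → Fin 3 → ℂ) (x : EuclideanSpace ℝ (Fin 3)) :
    curlC F x =
      ![pderivC 1 (fun y => F y 2) x - pderivC 2 (fun y => F y 1) x,
        pderivC 2 (fun y => F y 0) x - pderivC 0 (fun y => F y 2) x,
        pderivC 0 (fun y => F y 1) x - pderivC 1 (fun y => F y 0) x] := by
  ext i
  fin_cases i <;> rfl

variable {F G : EuclideanSpace ℝ (Fin 3) → Fin 3 → ℂ} {x : EuclideanSpace ℝ (Fin 3)}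

theorem divC_crossProduct
    (hF : ∀ i, DifferentiableAt ℝ (fun y => F y i) x)
    (hG : ∀ i, DifferentiableAt ℝ (fun y => G y i) x) :
    divC (fun y => crossProduct (F y) (G y)) x = curlC F x ⬝ᵥ G x - F x ⬝ᵥ curlC G x := by
  have pderivC_minor (i j k : Fin 3) :
      pderivC i (fun y => F y j * G y k - F y k * G y j) x =
        (F x j * pderivC i (fun y => G y k) x + G x k * pderivC i (fun y => F y j) x) -
          (F x k * pderivC i (fun y => G y j) x + G x j * pderivC i (fun y => F y k) x) := by
    rw [pderivC_sub i ((hF j).fun_mul (hG k)) ((hF k).fun_mul (hG j)),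
      pderivC_mul i (hF j) (hG k), pderivC_mul i (hF k) (hG j)]
  simp only [divC, Fin.sum_univ_three, cross_apply, cons_val_zero, cons_val_one, cons_val,
    pderivC_minor, curlC_eq_vec3, vec3_dotProduct]
  ring

theorem divC_crossProduct_of_curlC_eq
    (hF : ∀ i, DifferentiableAt ℝ (fun y => F y i) x)
    (hG : ∀ i, DifferentiableAt ℝ (fun y => G y i) x) {a : ℂ} {B D J : Fin 3 → ℂ}
    (hcurlF : curlC F x = -a • B) (hcurlG : curlC G x = a • D + J) :
    divC (fun y => crossProduct (F y) (G y)) x =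
      -a * (G x ⬝ᵥ B + F x ⬝ᵥ D) - J ⬝ᵥ F x := by
  rw [divC_crossProduct hF hG, hcurlF, hcurlG, smul_dotProduct, dotProduct_add, dotProduct_smul,
    dotProduct_comm B, dotProduct_comm (F x) J, smul_eq_mul, smul_eq_mul]
  ring

end VectorFields

theorem lorentz_reciprocity_general (ω : ℂ) (ε μ : Matrix (Fin 3) (Fin 3) ℂ)
    (E₁ E₂ H₁ H₂ J₁ J₂ : EuclideanSpace ℝ (Fin 3) → Fin 3 → ℂ)
    (x : EuclideanSpace ℝ (Fin 3))
    (hdE₁ : ∀ i, DifferentiableAt ℝ (fun y => E₁ y i) x)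
    (hdE₂ : ∀ i, DifferentiableAt ℝ (fun y => E₂ y i) x)
    (hdH₁ : ∀ i, DifferentiableAt ℝ (fun y => H₁ y i) x)
    (hdH₂ : ∀ i, DifferentiableAt ℝ (fun y => H₂ y i) x)
    (hE₁ : curlC E₁ x = -(Complex.I * ω) • μ *ᵥ H₁ x)
    (hE₂ : curlC E₂ x = -(Complex.I * ω) • μᵀ *ᵥ H₂ x)
    (hH₁ : curlC H₁ x = (Complex.I * ω) • ε *ᵥ E₁ x + J₁ x)
    (hH₂ : curlC H₂ x = (Complex.I * ω) • εᵀ *ᵥ E₂ x + J₂ x) :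
    divC (fun y => crossProduct (E₁ y) (H₂ y)) x - J₁ x ⬝ᵥ E₂ x
      = divC (fun y => crossProduct (E₂ y) (H₁ y)) x - J₂ x ⬝ᵥ E₁ x := by
  have magnetic_reciprocity : H₁ x ⬝ᵥ μᵀ *ᵥ H₂ x = H₂ x ⬝ᵥ μ *ᵥ H₁ x :=
    dotProduct_transpose_mulVec μ (H₁ x) (H₂ x)
  have electric_reciprocity : E₁ x ⬝ᵥ εᵀ *ᵥ E₂ x = E₂ x ⬝ᵥ ε *ᵥ E₁ x :=
    dotProduct_transpose_mulVec ε (E₁ x) (E₂ x)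
  rw [divC_crossProduct_of_curlC_eq hdE₁ hdH₂ hE₁ hH₂,
    divC_crossProduct_of_curlC_eq hdE₂ hdH₁ hE₂ hH₁, magnetic_reciprocity, electric_reciprocity]
  ring

/-- Lorentz reciprocity for the time-harmonic Maxwell equations: for symmetric permittivity
and permeability tensors `ε, μ` and two solutions `(Eᵢ, Hᵢ)` with current densities `Jᵢ` of
`curl Eᵢ = −iω μ Hᵢ`, `curl Hᵢ = iω ε Eᵢ + Jᵢ` at a point `x`, one has
`div(E₁ × H₂) − J₁ ⬝ᵥ E₂ = div(E₂ × H₁) − J₂ ⬝ᵥ E₁` at `x`. -/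
theorem lorentz_reciprocity (ω : ℝ) (ε μ : Matrix (Fin 3) (Fin 3) ℂ)
    (hε : ε.IsSymm) (hμ : μ.IsSymm)
    (E₁ E₂ H₁ H₂ J₁ J₂ : EuclideanSpace ℝ (Fin 3) → Fin 3 → ℂ)
    (x : EuclideanSpace ℝ (Fin 3))
    (hdE₁ : ∀ i, DifferentiableAt ℝ (fun y => E₁ y i) x)
    (hdE₂ : ∀ i, DifferentiableAt ℝ (fun y => E₂ y i) x)
    (hdH₁ : ∀ i, DifferentiableAt ℝ (fun y => H₁ y i) x)
    (hdH₂ : ∀ i, DifferentiableAt ℝ (fun y => H₂ y i) x)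
    (hE₁ : curlC E₁ x = (-(Complex.I * (ω : ℂ))) • μ.mulVec (H₁ x))
    (hE₂ : curlC E₂ x = (-(Complex.I * (ω : ℂ))) • μ.mulVec (H₂ x))
    (hH₁ : curlC H₁ x = (Complex.I * (ω : ℂ)) • ε.mulVec (E₁ x) + J₁ x)
    (hH₂ : curlC H₂ x = (Complex.I * (ω : ℂ)) • ε.mulVec (E₂ x) + J₂ x) :
    divC (fun y => crossProduct (E₁ y) (H₂ y)) x - J₁ x ⬝ᵥ E₂ x
      = divC (fun y => crossProduct (E₂ y) (H₁ y)) x - J₂ x ⬝ᵥ E₁ x := by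
  exact lorentz_reciprocity_general ω ε μ E₁ E₂ H₁ H₂ J₁ J₂ x hdE₁ hdE₂ hdH₁ hdH₂
    hE₁ (by rwa [hμ.eq]) hH₁ (by rwa [hε.eq])
end

section
/- Multisymplectic conservation law for the vorticity–velocity–pressure (Stokes/Maxwell-type) system: work on E := EuclideanSpace ℝ (Fin 3) and write ∂ᵢ f (x) := fderiv ℝ f x eᵢ for f differentiable at x, with eᵢ the standard basis; for vector fields F : E → (Fin 3 → ℝ) define curl F and div F componentwise via (curl F)ᵢ = ∂ⱼFₖ − ∂ₖFⱼ for cyclic (i,j,k) and div F = ∑ᵢ ∂ᵢFᵢ, and for a scalar f define grad f (x) := (∂₀f, ∂₁f, ∂₂f)(x); let ×₃ denote the cross product and • scalar multiplication. Let v₁, v₂, τ₁, τ₂ : E → (Fin 3 → ℝ) and η₁, η₂ : E → ℝ, all with components differentiable at a point x, satisfying at x for i = 1, 2: curl vᵢ (x) = τᵢ x, curl τᵢ (x) = grad ηᵢ (x), and div vᵢ (x) = 0. Then div (fun y => (τ₁ y) ×₃ (v₂ y) − (τ₂ y) ×₃ (v₁ y) + (η₂ y) • (v₁ y) − (η₁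 y) • (v₂ y)) (x) = 0. -/
/-- The `i`-th partial derivative (along the `i`-th standard basis vector) of a
real-valued function on `ℝ³`. -/
noncomputable def pderiv3 (i : Fin 3) (f : EuclideanSpace ℝ (Fin 3) → ℝ)
    (x : EuclideanSpace ℝ (Fin 3)) : ℝ :=
  fderiv ℝ f x (EuclideanSpace.single i 1)

/-- The curl of a vector field on `ℝ³`: `(curl F)ᵢ = ∂ⱼFₖ − ∂ₖFⱼ` for `(i, j, k)` a
cyclic permutation of `(0, 1, 2)`. -/
noncomputable def curl3 (F : EuclideanSpace ℝ (Fin 3) → Fin 3 → ℝ)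
    (x : EuclideanSpace ℝ (Fin 3)) : Fin 3 → ℝ :=
  fun i => pderiv3 (i + 1) (fun y => F y (i + 2)) x - pderiv3 (i + 2) (fun y => F y (i + 1)) x

/-- The divergence of a vector field on `ℝ³`. -/
noncomputable def div3 (F : EuclideanSpace ℝ (Fin 3) → Fin 3 → ℝ)
    (x : EuclideanSpace ℝ (Fin 3)) : ℝ :=
  ∑ i, pderiv3 i (fun y => F y i) x

/-- The gradient of a scalar field on `ℝ³`. -/
noncomputable def grad3 (f : EuclideanSpace ℝ (Fin 3) → ℝ)
    (x : EuclideanSpace ℝ (Fin 3)) : Fin 3 → ℝ :=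
  fun i => pderiv3 i f x

/-!
The form `ω(w₁, w₂)` is the antisymmetrization of the flux `τ₁ × v₂ - η₁ v₂`. The product rules for
`div (τ₁ × v₂)` and `div (η₁ v₂)` give this flux the divergence `-τ₁ ⬝ curl v₂ = -τ₁ ⬝ τ₂`, which is
symmetric in the two variations, so `div ω(w₁, w₂) = 0`.
-/

open Matrix

theorem differentiableAt_crossProduct {𝕜 E : Type*} [NontriviallyNormedField 𝕜]
    [NormedAddCommGroup E] [NormedSpace 𝕜 E] {F G : E → Fin 3 → 𝕜} {x : E}
    (hF : DifferentiableAt 𝕜 F x) (hG : DifferentiableAt 𝕜 G x) :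
    DifferentiableAt 𝕜 (fun y => F y ⨯₃ G y) x := by
  rw [differentiableAt_pi]
  intro i
  fin_cases i <;> simp only [cross_apply] <;> dsimp <;> fun_prop

section

variable {f g : EuclideanSpace ℝ (Fin 3) → ℝ} {F G : EuclideanSpace ℝ (Fin 3) → Fin 3 → ℝ}
  {x : EuclideanSpace ℝ (Fin 3)}

theorem pderiv3_sub (i : Fin 3) (hf : DifferentiableAt ℝ f x) (hg : DifferentiableAt ℝ g x) :
    pderiv3 i (fun y => f y - g y) x = pderiv3 i f x - pderiv3 i g x := by
  simp [pderiv3, fderiv_fun_sub hf hg]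

theorem pderiv3_mul (i : Fin 3) (hf : DifferentiableAt ℝ f x) (hg : DifferentiableAt ℝ g x) :
    pderiv3 i (fun y => f y * g y) x = f x * pderiv3 i g x + g x * pderiv3 i f x := by
  simp [pderiv3, fderiv_fun_mul hf hg]

theorem div3_sub (hF : DifferentiableAt ℝ F x) (hG : DifferentiableAt ℝ G x) :
    div3 (fun y => F y - G y) x = div3 F x - div3 G x := by
  rw [differentiableAt_pi] at hF hG
  simp only [div3, Pi.sub_apply, pderiv3_sub _ (hF _) (hG _), Finset.sum_sub_distrib]

theorem div3_smul (hf : DifferentiableAt ℝ f x) (hF : DifferentiableAt ℝ F x) :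
    div3 (fun y => f y • F y) x = f x * div3 F x + F x ⬝ᵥ grad3 f x := by
  rw [differentiableAt_pi] at hF
  simp only [div3, grad3, dotProduct, Pi.smul_apply, smul_eq_mul, pderiv3_mul _ hf (hF _),
    Finset.sum_add_distrib, Finset.mul_sum]

theorem div3_crossProduct (hF : DifferentiableAt ℝ F x) (hG : DifferentiableAt ℝ G x) :
    div3 (fun y => F y ⨯₃ G y) x = G x ⬝ᵥ curl3 F x - F x ⬝ᵥ curl3 G x := by
  rw [differentiableAt_pi] at hF hG
  have pderiv3_minor (i j k : Fin 3) :
      pderiv3 i (fun y => F y j * G y k - F y k * G y j) x =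
        F x j * pderiv3 i (fun y => G y k) x + G x k * pderiv3 i (fun y => F y j) x -
          (F x k * pderiv3 i (fun y => G y j) x + G x j * pderiv3 i (fun y => F y k) x) := by
    rw [pderiv3_sub i ((hF j).fun_mul (hG k)) ((hF k).fun_mul (hG j)),
      pderiv3_mul i (hF j) (hG k), pderiv3_mul i (hF k) (hG j)]
  simp only [div3, curl3, dotProduct, Fin.sum_univ_three, cross_apply, cons_val, pderiv3_minor,
    Fin.isValue, Fin.reduceAdd]
  ring

end

/-- The flux `τ × v - η v` pairing the vorticity `τ` and pressure `η` of one variation with the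
velocity `v` of another; antisymmetrizing it in the two variations gives the form `ω`. -/
noncomputable def vvpFlux (τ v : EuclideanSpace ℝ (Fin 3) → Fin 3 → ℝ)
    (η : EuclideanSpace ℝ (Fin 3) → ℝ) (x : EuclideanSpace ℝ (Fin 3)) : Fin 3 → ℝ :=
  τ x ⨯₃ v x - η x • v x

section

variable {τ v : EuclideanSpace ℝ (Fin 3) → Fin 3 → ℝ} {η : EuclideanSpace ℝ (Fin 3) → ℝ}
  {x : EuclideanSpace ℝ (Fin 3)}

theorem differentiableAt_vvpFlux (hτ : DifferentiableAt ℝ τ x) (hv : DifferentiableAt ℝ v x)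
    (hη : DifferentiableAt ℝ η x) : DifferentiableAt ℝ (vvpFlux τ v η) x :=
  (differentiableAt_crossProduct hτ hv).sub (hη.smul hv)

theorem div3_vvpFlux (hτ : DifferentiableAt ℝ τ x) (hv : DifferentiableAt ℝ v x)
    (hη : DifferentiableAt ℝ η x) :
    div3 (vvpFlux τ v η) x =
      v x ⬝ᵥ (curl3 τ x - grad3 η x) - τ x ⬝ᵥ curl3 v x - η x * div3 v x := by
  calc
    div3 (vvpFlux τ v η) x = div3 (fun y => τ y ⨯₃ v y) x - div3 (fun y => η y • v y) x :=
      div3_sub (differentiableAt_crossProduct hτ hv) (hη.fun_smul hv)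
    _ = v x ⬝ᵥ (curl3 τ x - grad3 η x) - τ x ⬝ᵥ curl3 v x - η x * div3 v x := by
      rw [div3_crossProduct hτ hv, div3_smul hη hv, dotProduct_sub]
      ring

theorem div3_vvpFlux_of_curl3_eq_grad3 (hτ : DifferentiableAt ℝ τ x)
    (hv : DifferentiableAt ℝ v x) (hη : DifferentiableAt ℝ η x)
    (hcurl : curl3 τ x = grad3 η x) (hdiv : div3 v x = 0) :
    div3 (vvpFlux τ v η) x = -(τ x ⬝ᵥ curl3 v x) := by
  simp [div3_vvpFlux hτ hv hη, hcurl, hdiv]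

end

/-- Multisymplectic conservation law for the vorticity–velocity–pressure (Stokes /
Maxwell-type) system: first variations `wᵢ = (τᵢ, vᵢ, ηᵢ)` satisfying
`curl vᵢ = τᵢ`, `curl τᵢ = grad ηᵢ`, `div vᵢ = 0` at a point `x` obey
`div(τ₁ × v₂ − τ₂ × v₁ + η₂ v₁ − η₁ v₂) = 0` at `x`. -/
theorem vvp_multisymplectic_conservation
    (v₁ v₂ τ₁ τ₂ : EuclideanSpace ℝ (Fin 3) → Fin 3 → ℝ)
    (η₁ η₂ : EuclideanSpace ℝ (Fin 3) → ℝ)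
    (x : EuclideanSpace ℝ (Fin 3))
    (hdv₁ : ∀ i, DifferentiableAt ℝ (fun y => v₁ y i) x)
    (hdv₂ : ∀ i, DifferentiableAt ℝ (fun y => v₂ y i) x)
    (hdτ₁ : ∀ i, DifferentiableAt ℝ (fun y => τ₁ y i) x)
    (hdτ₂ : ∀ i, DifferentiableAt ℝ (fun y => τ₂ y i) x)
    (hdη₁ : DifferentiableAt ℝ η₁ x)
    (hdη₂ : DifferentiableAt ℝ η₂ x)
    (hcv₁ : curl3 v₁ x = τ₁ x) (hcv₂ : curl3 v₂ x = τ₂ x)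
    (hcτ₁ : curl3 τ₁ x = grad3 η₁ x) (hcτ₂ : curl3 τ₂ x = grad3 η₂ x)
    (hdiv₁ : div3 v₁ x = 0) (hdiv₂ : div3 v₂ x = 0) :
    div3 (fun y =>
      crossProduct (τ₁ y) (v₂ y) - crossProduct (τ₂ y) (v₁ y)
        + η₂ y • v₁ y - η₁ y • v₂ y) x = 0 := by
  rw [← differentiableAt_pi] at hdv₁ hdv₂ hdτ₁ hdτ₂
  have form_eq_flux_sub_flux :
      (fun y => τ₁ y ⨯₃ v₂ y - τ₂ y ⨯₃ v₁ y + η₂ y • v₁ y - η₁ y • v₂ y) =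
        fun y => vvpFlux τ₁ v₂ η₁ y - vvpFlux τ₂ v₁ η₂ y := by
    funext y
    simp only [vvpFlux]
    abel
  have div_flux₁₂ : div3 (vvpFlux τ₁ v₂ η₁) x = -(τ₁ x ⬝ᵥ τ₂ x) := by
    rw [div3_vvpFlux_of_curl3_eq_grad3 hdτ₁ hdv₂ hdη₁ hcτ₁ hdiv₂, hcv₂]
  have div_flux₂₁ : div3 (vvpFlux τ₂ v₁ η₂) x = -(τ₂ x ⬝ᵥ τ₁ x) := by
    rw [div3_vvpFlux_of_curl3_eq_grad3 hdτ₂ hdv₁ hdη₂ hcτ₂ hdiv₁, hcv₁]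
  rw [form_eq_flux_sub_flux,
    div3_sub (differentiableAt_vvpFlux hdτ₁ hdv₂ hdη₁) (differentiableAt_vvpFlux hdτ₂ hdv₁ hdη₂),
    div_flux₁₂, div_flux₂₁, dotProduct_comm, sub_self]
end
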